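/- arXiv:1503.01299 — 4 statements merged into one kernel-verified Lean document; each statement's English description precedes it below -/
import Mathlib

section
/- Let f be a measurable real-valued function on I that is positive almost everywhere, integrable with ∫_I f(x) dx = 1, such that 1/f is integrable on I, and suppose there exists α > 0 with f(x) ≤ 2 − α for almost every x ∈ I. Then (∫_I f(x) dx) · (∫_I 1/f(x) dx) ≥ 1 + α · ∫_I (f(x) − 1)² dx. -/
open MeasureTheory

/-- Since `α * t ≤ α * (2 - α) ≤ 1`, the remainder `(t - 1) ^ 2 / t` of the tangent line of `1 / t`
at `1` dominates `α * (t - 1) ^ 2`. -/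
theorem tangent_add_mul_sq_le_one_div {t α : ℝ} (ht : 0 < t) (hα : 0 ≤ α) (hb : t ≤ 2 - α) :
    2 - t + α * (t - 1) ^ 2 ≤ 1 / t := by
  have h : α * t ≤ 1 := by nlinarith [mul_le_mul_of_nonneg_left hb hα, sq_nonneg (α - 1)]
  rw [le_div_iff₀ ht]
  nlinarith [mul_le_mul_of_nonneg_right h (sq_nonneg (t - 1))]

/-- Lemma 2 of the supplementary material: if `f` is measurable, a.e. positive on
`I = [-1/2, 1/2]`, integrable with `∫_I f = 1`, `1/f` integrable, and
`f ≤ 2 - α` a.e. for some `α > 0`, then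
`(∫_I f) · (∫_I 1/f) ≥ 1 + α ∫_I (f - 1)²`. -/
theorem integral_mul_integral_inv_ge
    (f : ℝ → ℝ) (hmeas : Measurable f)
    (μ : Measure ℝ) (hμ : μ = volume.restrict (Set.Icc (-(1 : ℝ) / 2) (1 / 2)))
    (hpos : ∀ᵐ x ∂μ, 0 < f x)
    (hf : Integrable f μ) (hone : ∫ x, f x ∂μ = 1)
    (hinv : Integrable (fun x => 1 / f x) μ)
    (α : ℝ) (hα : 0 < α) (hbound : ∀ᵐ x ∂μ, f x ≤ 2 - α) :
    (∫ x, f x ∂μ) * ∫ x, 1 / f x ∂μ ≥ 1 + α * ∫ x, (f x - 1) ^ 2 ∂μ := by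
  have hprob : IsProbabilityMeasure μ := ⟨by rw [hμ]; norm_num⟩
  have hpt : ∀ᵐ x ∂μ, 2 - f x + α * (f x - 1) ^ 2 ≤ 1 / f x := by
    filter_upwards [hpos, hbound] with x hx hb
    exact tangent_add_mul_sq_le_one_div hx hα.le hb
  have hlin : Integrable (fun x => 2 - f x) μ := (integrable_const 2).sub hf
  have hsq : Integrable (fun x => α * (f x - 1) ^ 2) μ := by
    refine (hinv.sub hlin).mono' (by fun_prop) ?_
    filter_upwards [hpt] with x hx
    rw [Real.norm_of_nonneg (by positivity), Pi.sub_apply]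
    linarith
  have hint := integral_mono_ae (hlin.add hsq) hinv hpt
  simp only [Pi.add_apply] at hint
  rw [integral_add hlin hsq, integral_sub (integrable_const 2) hf, integral_const_mul, hone] at hint
  simp only [integral_const, probReal_univ, one_smul] at hint
  rw [hone]
  linarith
end

section
/- Let S and g be measurable real-valued functions on I, each positive almost everywhere, with S, g, 1/g and g·S all integrable on I, and suppose there exists α > 0 such that g(ν) ≤ (2 − α)·⟨g⟩ for almost every ν ∈ I. Then ρ_fwd · ρ_bwd ≤ [1 + α · ∫_I ((g(ν) − ⟨g⟩)/⟨g⟩)² dν]⁻¹, where ρ_fwd := ⟨g·S⟩/(⟨S⟩·⟨g⟩) and ρ_bwd := ⟨S⟩/(⟨g·S⟩·⟨1/g⟩). Moreover, if g is not almost-everywhere constant on I, then this upper bound is strictly less than 1. -/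
open MeasureTheory

/-- The integral of an almost everywhere positive integrable function is positive. -/
lemma integral_pos_of_ae_pos {Ω : Type*} [MeasurableSpace Ω] {μ : Measure Ω} [NeZero μ]
    {f : Ω → ℝ} (hf : Integrable f μ) (hpos : ∀ᵐ x ∂μ, 0 < f x) : 0 < ∫ x, f x ∂μ := by
  refine lt_of_le_of_ne (integral_nonneg_of_ae (hpos.mono fun _ h => h.le)) fun h => ?_
  have hzero := (integral_eq_zero_iff_of_nonneg_ae (hpos.mono fun _ h => h.le) hf).1 h.symm
  obtain ⟨x, hx, hx'⟩ := (hpos.and hzero).exists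
  exact hx.ne' hx'

lemma mul_sq_div_le_of_le_two_sub_mul {y m α : ℝ} (hy : 0 < y) (hm : 0 < m) (hα : 0 < α)
    (hle : y ≤ (2 - α) * m) :
    α * ((y - m) / m) ^ 2 ≤ m * (1 / y) + m⁻¹ * y - 2 := by
  have hαy : α * y ≤ m := by nlinarith [mul_nonneg (sq_nonneg (α - 1)) hm.le]
  have hdiff : m * (1 / y) + m⁻¹ * y - 2 - α * ((y - m) / m) ^ 2
      = (m - α * y) * (y - m) ^ 2 / (y * m ^ 2) := by
    field_simp
    ring
  have : 0 ≤ (m - α * y) * (y - m) ^ 2 / (y * m ^ 2) :=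
    div_nonneg (mul_nonneg (sub_nonneg.2 hαy) (sq_nonneg _)) (by positivity)
  linarith

section

variable {Ω : Type*} [MeasurableSpace Ω] {μ : Measure Ω} {g : Ω → ℝ}

lemma integrable_sq_relative_deviation [IsFiniteMeasure μ] (hg : Integrable g μ)
    (hginv : Integrable (fun x => 1 / g x) μ) (hgpos : ∀ᵐ x ∂μ, 0 < g x)
    {m α : ℝ} (hm : 0 < m) (hα : 0 < α) (hbound : ∀ᵐ x ∂μ, g x ≤ (2 - α) * m) :
    Integrable (fun x => ((g x - m) / m) ^ 2) μ := by
  have hdom : Integrable (fun x => α⁻¹ * (m * (1 / g x) + m⁻¹ * g x - 2)) μ :=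
    (((hginv.const_mul m).add (hg.const_mul m⁻¹)).sub (integrable_const 2)).const_mul α⁻¹
  refine hdom.mono' (((hg.sub (integrable_const m)).div_const m).aestronglyMeasurable.pow 2) ?_
  filter_upwards [hgpos, hbound] with x hx hxb
  rw [Real.norm_of_nonneg (sq_nonneg _), inv_mul_eq_div, le_div_iff₀' hα]
  exact mul_sq_div_le_of_le_two_sub_mul hx hm hα hxb

/-- A quantitative arithmetic-harmonic mean inequality for functions bounded by `2 - α` times
their mean. -/
lemma one_add_mul_integral_sq_le_integral_mul_integral_inv [IsProbabilityMeasure μ]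
    (hg : Integrable g μ) (hginv : Integrable (fun x => 1 / g x) μ)
    (hgpos : ∀ᵐ x ∂μ, 0 < g x) {α : ℝ} (hα : 0 < α)
    (hbound : ∀ᵐ x ∂μ, g x ≤ (2 - α) * ∫ y, g y ∂μ) :
    1 + α * ∫ x, ((g x - ∫ y, g y ∂μ) / ∫ y, g y ∂μ) ^ 2 ∂μ
      ≤ (∫ x, g x ∂μ) * ∫ x, 1 / g x ∂μ := by
  have hm := integral_pos_of_ae_pos hg hgpos
  set m := ∫ y, g y ∂μ with hmdef
  have hadd : Integrable (fun x => m * (1 / g x) + m⁻¹ * g x) μ :=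
    (hginv.const_mul m).add (hg.const_mul m⁻¹)
  have hint : ∫ x, (m * (1 / g x) + m⁻¹ * g x - 2) ∂μ = m * (∫ x, 1 / g x ∂μ) - 1 := by
    rw [integral_sub hadd (integrable_const 2),
      integral_add (hginv.const_mul m) (hg.const_mul m⁻¹), integral_const_mul,
      integral_const_mul, ← hmdef, inv_mul_cancel₀ hm.ne', integral_const]
    simp only [probReal_univ, one_smul]
    ring
  have hmono : ∫ x, α * ((g x - m) / m) ^ 2 ∂μ ≤ ∫ x, (m * (1 / g x) + m⁻¹ * g x - 2) ∂μ := by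
    refine integral_mono_ae
      ((integrable_sq_relative_deviation hg hginv hgpos hm hα hbound).const_mul α)
      (hadd.sub (integrable_const 2)) ?_
    filter_upwards [hgpos, hbound] with x hx hxb
    exact mul_sq_div_le_of_le_two_sub_mul hx hm hα hxb
  rw [integral_const_mul, hint] at hmono
  linarith

end

/-- Second part of the Forward–Backward Inequality (Proposition 2): if
`g ≤ (2 - α)·⟨g⟩` a.e. for some `α > 0`, then the product of the forward and
backward spectral dependency ratios is at most
`[1 + α ∫_I ((g - ⟨g⟩)/⟨g⟩)²]⁻¹`, and moreover this bound is strictly less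
than `1` whenever `g` is not a.e. constant on `I = [-1/2, 1/2]`. -/
theorem sdr_product_le_bound
    (S g : ℝ → ℝ) (hSmeas : Measurable S) (hgmeas : Measurable g)
    (μ : Measure ℝ) (hμ : μ = volume.restrict (Set.Icc (-(1 : ℝ) / 2) (1 / 2)))
    (hSpos : ∀ᵐ x ∂μ, 0 < S x) (hgpos : ∀ᵐ x ∂μ, 0 < g x)
    (hS : Integrable S μ) (hg : Integrable g μ)
    (hginv : Integrable (fun x => 1 / g x) μ)
    (hgS : Integrable (fun x => g x * S x) μ)
    (α : ℝ) (hα : 0 < α)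
    (hbound : ∀ᵐ ν ∂μ, g ν ≤ (2 - α) * ∫ x, g x ∂μ) :
    ((∫ x, g x * S x ∂μ) / ((∫ x, S x ∂μ) * ∫ x, g x ∂μ)) *
        ((∫ x, S x ∂μ) / ((∫ x, g x * S x ∂μ) * ∫ x, 1 / g x ∂μ)) ≤
      (1 + α * ∫ ν, ((g ν - ∫ x, g x ∂μ) / ∫ x, g x ∂μ) ^ 2 ∂μ)⁻¹ ∧
    ((¬ ∃ c : ℝ, g =ᵐ[μ] fun _ => c) →
      (1 + α * ∫ ν, ((g ν - ∫ x, g x ∂μ) / ∫ x, g x ∂μ) ^ 2 ∂μ)⁻¹ < 1) := by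
  have hprob : IsProbabilityMeasure μ := ⟨by
    rw [hμ, Measure.restrict_apply_univ, Real.volume_Icc]
    norm_num⟩
  have hm := integral_pos_of_ae_pos hg hgpos
  have hSint := integral_pos_of_ae_pos hS hSpos
  have hgSint := integral_pos_of_ae_pos hgS
    (by filter_upwards [hSpos, hgpos] with x h₁ h₂ using mul_pos h₂ h₁)
  have hnonneg : 0 ≤ ∫ ν, ((g ν - ∫ x, g x ∂μ) / ∫ x, g x ∂μ) ^ 2 ∂μ :=
    integral_nonneg fun _ => sq_nonneg _
  refine ⟨?_, fun hconst => ?_⟩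
  · have hprod : ((∫ x, g x * S x ∂μ) / ((∫ x, S x ∂μ) * ∫ x, g x ∂μ)) *
        ((∫ x, S x ∂μ) / ((∫ x, g x * S x ∂μ) * ∫ x, 1 / g x ∂μ))
        = ((∫ x, g x ∂μ) * ∫ x, 1 / g x ∂μ)⁻¹ := by
      have hinv := integral_pos_of_ae_pos hginv (hgpos.mono fun _ h => one_div_pos.2 h)
      generalize (∫ x, 1 / g x ∂μ) = a at *
      field_simp
    rw [hprod]
    exact inv_anti₀ (by positivity)
      (one_add_mul_integral_sq_le_integral_mul_integral_inv hg hginv hgpos hα hbound)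
  · refine inv_lt_one_of_one_lt₀ (lt_add_of_pos_right 1 (mul_pos hα ?_))
    refine lt_of_le_of_ne hnonneg fun hzero => hconst ⟨∫ x, g x ∂μ, ?_⟩
    have hae := (integral_eq_zero_iff_of_nonneg (fun _ => sq_nonneg _)
      (integrable_sq_relative_deviation hg hginv hgpos hm hα hbound)).1 hzero.symm
    filter_upwards [hae] with x hx
    have hdiv := (div_eq_zero_iff.1 (pow_eq_zero_iff two_ne_zero |>.1 hx)).resolve_right hm.ne'
    exact sub_eq_zero.1 hdiv
end

section
/- There exists a constant κ > 0, independent of all other data, such that the following holds: for every m ≥ 2, every real m × m symmetric positive semidefinite matrix Σ, every real n × m matrix A, and every ε > 0, if U is drawn from the Haar probability measure on the orthogonal group O(m), then with probability at least 1 − exp(−κ·(m−1)·ε²) one has |τ_n(A·U·Σ·Uᵀ·Aᵀ) − τ_m(Σ)·τ_n(A·Aᵀ)| ≤ 2ε·‖Σ‖·‖A·Aᵀ‖, where τ_k(B) := trace(B)/k denotes the normalized trace of a k × k matrix and ‖·‖ denotes the operator (spectral) norm. -/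
open MeasureTheory Matrix

/-- The `L²` operator (spectral) norm of a real matrix. -/
noncomputable def matrixOpNorm {n m : ℕ} (A : Matrix (Fin n) (Fin m) ℝ) : ℝ :=
  ‖LinearMap.toContinuousLinearMap (Matrix.toEuclideanLin A)‖

/-- Integration by parts: `l * E[Y g(Y)]` is the mean of `Γ` times the derivative of `g` at `Y`,
for all `C¹` functions `g`. -/
def SteinIdentity {Ω : Type*} [MeasurableSpace Ω] (μ : Measure Ω) (l : ℝ) (Y Γ : Ω → ℝ) : Prop :=
  ∀ g g' : ℝ → ℝ, (∀ y, HasDerivAt g (g' y) y) → Continuous g' →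
    l * ∫ ω, Y ω * g (Y ω) ∂μ = ∫ ω, Γ ω * g' (Y ω) ∂μ

lemma SteinIdentity.neg {Ω : Type*} [MeasurableSpace Ω] {μ : Measure Ω} {l : ℝ} {Y Γ : Ω → ℝ}
    (h : SteinIdentity μ l Y Γ) : SteinIdentity μ l (fun ω => -Y ω) Γ := by
  intro g g' hg hg'
  have := h (fun y => -g (-y)) (fun y => g' (-y))
    (fun y => by simpa using ((hg (-y)).comp y (hasDerivAt_neg y)).fun_neg) (by fun_prop)
  simpa using this

lemma integrable_of_measurable_of_abs_le {Ω : Type*} [MeasurableSpace Ω] {μ : Measure Ω}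
    [IsFiniteMeasure μ] {f : Ω → ℝ} (hf : Measurable f) (C : ℝ) (hC : ∀ ω, |f ω| ≤ C) :
    Integrable f μ :=
  Integrable.of_bound hf.aestronglyMeasurable C (Filter.Eventually.of_forall hC)

lemma integrable_exp_mul_of_abs_le {Ω : Type*} [MeasurableSpace Ω] {μ : Measure Ω}
    [IsFiniteMeasure μ] {Y : Ω → ℝ} (hY : Measurable Y) {B : ℝ} (hB : ∀ ω, |Y ω| ≤ B) (θ : ℝ) :
    Integrable (fun ω => Real.exp (θ * Y ω)) μ :=
  ProbabilityTheory.integrable_exp_mul_of_mem_Icc hY.aemeasurable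
    (Filter.Eventually.of_forall fun ω => abs_le.mp (hB ω))

lemma SteinIdentity.mgf_le {Ω : Type*} [MeasurableSpace Ω] {μ : Measure Ω}
    [IsProbabilityMeasure μ] {l V B : ℝ} {Y Γ : Ω → ℝ} (h : SteinIdentity μ l Y Γ)
    (hl : 0 < l) (hY : Measurable Y) (hB : ∀ ω, |Y ω| ≤ B)
    (hΓ0 : ∀ ω, 0 ≤ Γ ω) (hΓV : ∀ ω, Γ ω ≤ V) {θ : ℝ} (hθ : 0 ≤ θ) :
    ProbabilityTheory.mgf Y μ θ ≤ Real.exp (θ ^ 2 * V / (2 * l)) := by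
  have hint := integrable_exp_mul_of_abs_le (μ := μ) hY hB
  have hset : ProbabilityTheory.integrableExpSet Y μ = Set.univ :=
    Set.eq_univ_of_forall hint
  have hder (s : ℝ) : HasDerivAt (ProbabilityTheory.mgf Y μ)
      (∫ ω, Y ω * Real.exp (s * Y ω) ∂μ) s :=
    ProbabilityTheory.hasDerivAt_mgf (by simp [hset])
  have hle (s : ℝ) (hs : 0 ≤ s) : l * ∫ ω, Y ω * Real.exp (s * Y ω) ∂μ ≤
      s * V * ProbabilityTheory.mgf Y μ s := by
    rw [h (fun y => Real.exp (s * y)) (fun y => Real.exp (s * y) * s)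
      (fun y => by simpa using ((hasDerivAt_id y).const_mul s).exp) (by fun_prop),
      ProbabilityTheory.mgf, ← integral_const_mul]
    have hle' (ω : Ω) : Γ ω * (Real.exp (s * Y ω) * s) ≤ s * V * Real.exp (s * Y ω) := by
      nlinarith [mul_le_mul_of_nonneg_right (hΓV ω)
        (mul_nonneg (Real.exp_pos (s * Y ω)).le hs)]
    refine integral_mono_of_nonneg (Filter.Eventually.of_forall fun ω => ?_)
      ((hint s).const_mul _) (Filter.Eventually.of_forall hle')
    exact mul_nonneg (hΓ0 ω) (mul_nonneg (Real.exp_pos _).le hs)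
  set ψ : ℝ → ℝ := fun s => ProbabilityTheory.mgf Y μ s * Real.exp (-(s ^ 2 * V / (2 * l)))
  have hψ (s : ℝ) : HasDerivAt ψ ((∫ ω, Y ω * Real.exp (s * Y ω) ∂μ) *
        Real.exp (-(s ^ 2 * V / (2 * l))) + ProbabilityTheory.mgf Y μ s *
        (Real.exp (-(s ^ 2 * V / (2 * l))) * (-(2 * s * V / (2 * l))))) s := by
    refine (hder s).mul (HasDerivAt.exp ?_)
    simpa using ((((hasDerivAt_id s).pow 2).mul_const V).div_const (2 * l)).fun_neg
  have hanti : AntitoneOn ψ (Set.Ici 0) := by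
    refine antitoneOn_of_deriv_nonpos (convex_Ici 0)
      (fun s _ => (hψ s).continuousAt.continuousWithinAt)
      (fun s _ => (hψ s).differentiableAt.differentiableWithinAt) fun s hs => ?_
    have hs0 : 0 ≤ s := by
      rw [interior_Ici] at hs
      exact le_of_lt hs
    rw [(hψ s).deriv]
    have h1 : ∫ ω, Y ω * Real.exp (s * Y ω) ∂μ ≤ s * V * ProbabilityTheory.mgf Y μ s / l := by
      rw [le_div_iff₀ hl]; linarith [hle s hs0]
    have h2 := mul_le_mul_of_nonneg_right h1 (Real.exp_pos (-(s ^ 2 * V / (2 * l)))).le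
    have h3 : s * V * ProbabilityTheory.mgf Y μ s / l * Real.exp (-(s ^ 2 * V / (2 * l))) +
      ProbabilityTheory.mgf Y μ s *
        (Real.exp (-(s ^ 2 * V / (2 * l))) * (-(2 * s * V / (2 * l)))) = 0 := by
      field_simp; ring
    linarith
  have h0 : ψ θ ≤ ψ 0 := hanti Set.self_mem_Ici hθ hθ
  simp only [ψ, ProbabilityTheory.mgf_zero] at h0
  rw [Real.exp_neg, ← div_eq_mul_inv, div_le_iff₀ (Real.exp_pos _)] at h0
  simpa using h0

lemma SteinIdentity.measure_ge_le {Ω : Type*} [MeasurableSpace Ω] {μ : Measure Ω}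
    [IsProbabilityMeasure μ] {l V B t : ℝ} {Y Γ : Ω → ℝ} (h : SteinIdentity μ l Y Γ)
    (hl : 0 < l) (hV : 0 < V) (ht : 0 < t) (hY : Measurable Y) (hB : ∀ ω, |Y ω| ≤ B)
    (hΓ0 : ∀ ω, 0 ≤ Γ ω) (hΓV : ∀ ω, Γ ω ≤ V) :
    μ.real {ω | t ≤ Y ω} ≤ Real.exp (-(l * t ^ 2 / V) / 2) := by
  have hθ : 0 ≤ l * t / V := by positivity
  refine (ProbabilityTheory.measure_ge_le_exp_mul_mgf t hθ
    (integrable_exp_mul_of_abs_le hY hB _)).trans ?_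
  refine (mul_le_mul_of_nonneg_left (h.mgf_le hl hY hB hΓ0 hΓV hθ)
    (Real.exp_pos _).le).trans ?_
  rw [← Real.exp_add]
  refine Real.exp_le_exp.mpr (le_of_eq ?_)
  field_simp
  ring

lemma SteinIdentity.measure_abs_gt_le {Ω : Type*} [MeasurableSpace Ω] {μ : Measure Ω}
    [IsProbabilityMeasure μ] {l V B t : ℝ} {Y Γ : Ω → ℝ} (h : SteinIdentity μ l Y Γ)
    (hl : 0 < l) (hV : 0 < V) (ht : 0 < t) (hY : Measurable Y) (hB : ∀ ω, |Y ω| ≤ B)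
    (hΓ0 : ∀ ω, 0 ≤ Γ ω) (hΓV : ∀ ω, Γ ω ≤ V) :
    μ.real {ω | t < |Y ω|} ≤ 2 * Real.exp (-(l * t ^ 2 / V) / 2) := by
  have h1 := h.measure_ge_le hl hV ht hY hB hΓ0 hΓV
  have h2 := h.neg.measure_ge_le hl hV ht hY.neg (by simpa using hB) hΓ0 hΓV
  have hsub : {ω | t < |Y ω|} ⊆ {ω | t ≤ Y ω} ∪ {ω | t ≤ -Y ω} := by
    intro ω hω
    rw [Set.mem_ofPred_eq, lt_abs] at hω
    rcases hω with h | h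
    · exact Or.inl h.le
    · exact Or.inr h.le
  linarith [(measureReal_mono (μ := μ) hsub).trans (measureReal_union_le _ _)]

/-- The antiderivative vanishing at `0` of the tent function supported on `[-t, t]`. -/
lemma exists_tent_antideriv {t : ℝ} (ht : 0 < t) :
    ∃ g : ℝ → ℝ, (∀ y, HasDerivAt g (max 0 (1 - |y| / t)) y) ∧ (∀ y, 0 ≤ y * g y) ∧
      ∀ y, t < |y| → t ^ 2 / 2 ≤ y * g y := by
  have hc : Continuous fun y : ℝ => max 0 (1 - |y| / t) := by fun_prop
  set g : ℝ → ℝ := fun y => ∫ s in (0 : ℝ)..y, max 0 (1 - |s| / t)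
  have hg (y : ℝ) : HasDerivAt g (max 0 (1 - |y| / t)) y :=
    intervalIntegral.integral_hasDerivAt_right (hc.intervalIntegrable _ _)
      (hc.stronglyMeasurableAtFilter _ _) hc.continuousAt
  have hmono : Monotone g := monotone_of_deriv_nonneg (fun y => (hg y).differentiableAt)
    fun y => by rw [(hg y).deriv]; exact le_max_left _ _
  have hg0 : g 0 = 0 := by simp [g]
  have hneg (y : ℝ) : g (-y) = -g y := by
    have := intervalIntegral.integral_comp_neg (a := 0) (b := y)
      (fun s : ℝ => max 0 (1 - |s| / t))
    simp only [abs_neg, neg_zero] at this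
    simp only [g]
    rw [this, intervalIntegral.integral_symm]
  have hgt : t / 2 ≤ g t := by
    have h1 : g t = ∫ s in (0 : ℝ)..t, (1 - s / t) := by
      refine intervalIntegral.integral_congr fun s hs => ?_
      rw [Set.uIcc_of_le ht.le] at hs
      have : s / t ≤ 1 := (div_le_one ht).mpr hs.2
      simp only [abs_of_nonneg hs.1]
      exact max_eq_right (by linarith)
    have hi : IntervalIntegrable (fun s : ℝ => s / t) volume 0 t :=
      (continuous_id.div_const t).intervalIntegrable _ _
    rw [h1, intervalIntegral.integral_sub (by simp) hi]
    simp only [intervalIntegral.integral_const, intervalIntegral.integral_div, integral_id]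
    apply le_of_eq
    field_simp
    simp
    ring
  refine ⟨g, hg, fun y => ?_, fun y hy => ?_⟩
  · rcases le_total 0 y with h | h
    · exact mul_nonneg h (hg0 ▸ hmono h)
    · exact mul_nonneg_of_nonpos_of_nonpos h (hg0 ▸ hmono h)
  · have key (z : ℝ) (hz : t < z) : t ^ 2 / 2 ≤ z * g z := by
      nlinarith [hmono hz.le]
    rcases lt_abs.mp hy with h | h
    · exact key y h
    · simpa [hneg] using key (-y) h

lemma SteinIdentity.small_ball {Ω : Type*} [MeasurableSpace Ω] {μ : Measure Ω}
    [IsProbabilityMeasure μ] {l V B t : ℝ} {Y Γ : Ω → ℝ} (h : SteinIdentity μ l Y Γ)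
    (hl : 0 < l) (ht : 0 < t) (hY : Measurable Y) (hB : ∀ ω, |Y ω| ≤ B)
    (hΓ0 : ∀ ω, 0 ≤ Γ ω) (hΓV : ∀ ω, Γ ω ≤ V) :
    l * t ^ 2 / 2 * μ.real {ω | t < |Y ω|} ≤ V * μ.real {ω | |Y ω| ≤ t} := by
  obtain ⟨g, hg, hg0, hgt⟩ := exists_tent_antideriv ht
  have hgc : Continuous g := continuous_iff_continuousAt.mpr fun y => (hg y).continuousAt
  have hm1 : MeasurableSet {ω | t < |Y ω|} := measurableSet_lt measurable_const hY.abs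
  have hm2 : MeasurableSet {ω | |Y ω| ≤ t} := measurableSet_le hY.abs measurable_const
  have hint : Integrable (fun ω => Y ω * g (Y ω)) μ := by
    obtain ⟨C, hC⟩ := (isCompact_Icc (a := -B) (b := B)).exists_bound_of_continuousOn
      (f := fun y => y * g y) (by fun_prop)
    exact integrable_of_measurable_of_abs_le (hY.mul (hgc.measurable.comp hY)) C
      fun ω => hC _ (abs_le.mp (hB ω))
  have hV : 0 ≤ V := by
    obtain ⟨ω⟩ := μ.nonempty_of_neZero
    exact (hΓ0 ω).trans (hΓV ω)
  have h1 : t ^ 2 / 2 * μ.real {ω | t < |Y ω|} ≤ ∫ ω, Y ω * g (Y ω) ∂μ := by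
    have : ∫ ω, Set.indicator {ω | t < |Y ω|} (fun _ => t ^ 2 / 2) ω ∂μ ≤
        ∫ ω, Y ω * g (Y ω) ∂μ := by
      refine integral_mono ((integrable_const _).indicator hm1) hint fun ω => ?_
      refine Set.indicator_apply_le' (fun hω => hgt _ hω) fun _ => hg0 _
    rwa [integral_indicator_const _ hm1, smul_eq_mul, mul_comm] at this
  have h2 : ∫ ω, Γ ω * max 0 (1 - |Y ω| / t) ∂μ ≤ V * μ.real {ω | |Y ω| ≤ t} := by
    have : ∫ ω, Γ ω * max 0 (1 - |Y ω| / t) ∂μ ≤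
        ∫ ω, Set.indicator {ω | |Y ω| ≤ t} (fun _ => V) ω ∂μ := by
      refine integral_mono_of_nonneg
        (Filter.Eventually.of_forall fun ω => mul_nonneg (hΓ0 ω) (le_max_left _ _))
        ((integrable_const _).indicator hm2) (Filter.Eventually.of_forall fun ω => ?_)
      by_cases hω : |Y ω| ≤ t
      · have h1 : max 0 (1 - |Y ω| / t) ≤ 1 := max_le zero_le_one (by
          have : 0 ≤ |Y ω| / t := by positivity
          linarith)
        simp only [Set.indicator, Set.mem_ofPred_eq, hω, if_true]
        calc Γ ω * max 0 (1 - |Y ω| / t) ≤ V * 1 :=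
              mul_le_mul (hΓV ω) h1 (le_max_left _ _) hV
          _ = V := mul_one V
      · have h1 : max 0 (1 - |Y ω| / t) = 0 := max_eq_left (by
          have : 1 < |Y ω| / t := (one_lt_div ht).mpr (not_le.mp hω)
          linarith)
        simp [h1, hω]
    rwa [integral_indicator_const _ hm2, smul_eq_mul, mul_comm] at this
  have h3 := h g _ hg (by fun_prop)
  nlinarith [mul_le_mul_of_nonneg_left h1 hl.le]

/-- A bounded random variable satisfying a Stein identity with `Γ ≤ V` concentrates around `0`,
with a bound that is informative at every scale `t`. -/
theorem SteinIdentity.concentration {Ω : Type*} [MeasurableSpace Ω] {μ : Measure Ω}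
    [IsProbabilityMeasure μ] {l V B t : ℝ} {Y Γ : Ω → ℝ} (h : SteinIdentity μ l Y Γ)
    (hl : 0 < l) (hV : 0 < V) (ht : 0 < t) (hY : Measurable Y) (hB : ∀ ω, |Y ω| ≤ B)
    (hΓ0 : ∀ ω, 0 ≤ Γ ω) (hΓV : ∀ ω, Γ ω ≤ V) :
    1 - Real.exp (-(l * t ^ 2 / V) / 8) ≤ μ.real {ω | |Y ω| ≤ t} := by
  have hcompl : μ.real {ω | t < |Y ω|} = 1 - μ.real {ω | |Y ω| ≤ t} := by
    rw [← probReal_compl_eq_one_sub (measurableSet_le hY.abs measurable_const)]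
    congr 1
    ext ω
    simp
  have hlarge := h.measure_abs_gt_le hl hV ht hY hB hΓ0 hΓV
  have hsmall := h.small_ball hl ht hY hB hΓ0 hΓV
  have hx : 0 < l * t ^ 2 / V := by positivity
  have hlt : l * t ^ 2 = l * t ^ 2 / V * V := by field_simp
  rw [hlt] at hsmall
  generalize l * t ^ 2 / V = x at *
  rw [hcompl] at hlarge hsmall
  generalize μ.real {ω | |Y ω| ≤ t} = p at *
  rcases le_total x 4 with hx4 | hx4
  · have h1 : x / 2 * (1 - p) ≤ p := by
      refine le_of_mul_le_mul_left ?_ hV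
      linarith
    have h2 : 1 - x / 8 ≤ Real.exp (-x / 8) := by
      linarith [Real.add_one_le_exp (-x / 8)]
    by_contra! hp
    have hq : 1 - x / 8 < 1 - p := by linarith
    nlinarith [mul_lt_mul_of_pos_left hq (show 0 < 1 + x / 2 by linarith)]
  · have h1 : (2 : ℝ) ≤ Real.exp (3 * x / 8) := by
      linarith [Real.add_one_le_exp (3 * x / 8)]
    have h2 : 2 * Real.exp (-x / 2) ≤ Real.exp (-x / 8) := by
      calc 2 * Real.exp (-x / 2) ≤ Real.exp (3 * x / 8) * Real.exp (-x / 2) := by gcongr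
        _ = Real.exp (-x / 8) := by rw [← Real.exp_add]; congr 1; ring
    linarith

lemma integrable_of_continuous_compactSpace {G : Type*} [TopologicalSpace G] [CompactSpace G]
    [MeasurableSpace G] [BorelSpace G] {μ : Measure G} [IsFiniteMeasure μ] {F : G → ℝ}
    (hF : Continuous F) : Integrable F μ := by
  obtain ⟨C, hC⟩ := isCompact_univ.exists_bound_of_continuousOn hF.continuousOn
  exact Integrable.of_bound hF.measurable.aestronglyMeasurable C
    (Filter.Eventually.of_forall fun U => hC U (Set.mem_univ U))

/-- The derivative of a function along a left-acting one-parameter subgroup has mean zero under a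
left-invariant measure. -/
lemma integral_deriv_oneParameter_eq_zero {G : Type*} [Group G] [TopologicalSpace G]
    [CompactSpace G] [MeasurableSpace G] [BorelSpace G] [ContinuousMul G]
    {μ : Measure G} [IsProbabilityMeasure μ] [μ.IsMulLeftInvariant]
    {R : ℝ → G} (hR : ∀ s t, R (s + t) = R s * R t)
    {F F' : G → ℝ} (hF : Continuous F) (hF' : Continuous F')
    (hd : ∀ U, HasDerivAt (fun t => F (R t * U)) (F' U) 0) :
    ∫ U, F' U ∂μ = 0 := by
  have hR0 : R 0 = 1 := by simpa using hR 0 0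
  have hdt (U : G) (t : ℝ) : HasDerivAt (fun t => F (R t * U)) (F' (R t * U)) t := by
    have h0 : HasDerivAt (fun s => F (R s * (R t * U))) (F' (R t * U)) (t - t) := by
      simpa using hd (R t * U)
    simpa [← mul_assoc, ← hR] using h0.comp_sub_const t t
  obtain ⟨C, hC⟩ := isCompact_univ.exists_bound_of_continuousOn hF'.continuousOn
  have key := (hasDerivAt_integral_of_dominated_loc_of_deriv_le (μ := μ) (x₀ := (0 : ℝ))
    (F := fun t U => F (R t * U)) (F' := fun t U => F' (R t * U)) (bound := fun _ => C)
    Filter.univ_mem (Filter.Eventually.of_forall fun t =>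
      ((by fun_prop : Continuous fun U => F (R t * U)).measurable.aestronglyMeasurable))
    (integrable_of_continuous_compactSpace (by fun_prop))
    ((by fun_prop : Continuous fun U => F' (R 0 * U)).measurable.aestronglyMeasurable)
    (Filter.Eventually.of_forall fun U t _ => hC _ (Set.mem_univ _)) (integrable_const C)
    (Filter.Eventually.of_forall fun U t _ => hdt U t)).2
  simp only [integral_mul_left_eq_self (μ := μ) F, hR0, one_mul] at key
  exact key.unique (hasDerivAt_const _ _)

section

variable {m : ℕ}

instance : CompactSpace (orthogonalGroup (Fin m) ℝ) := by
  refine isCompact_iff_compactSpace.mp ?_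
  have hK : IsCompact (Set.pi Set.univ fun _ : Fin m => Set.pi Set.univ fun _ : Fin m =>
      Set.Icc (-1 : ℝ) 1) :=
    isCompact_univ_pi fun _ => isCompact_univ_pi fun _ => isCompact_Icc
  refine IsCompact.of_isClosed_subset (X := Matrix (Fin m) (Fin m) ℝ) hK isClosed_unitary ?_
  intro U hU i _ j _
  exact abs_le.mp (entry_norm_bound_of_unitary hU i j)

/-- The one-parameter group of rotations generated by a skew-symmetric matrix. -/
noncomputable def skewRotation (X : Matrix (Fin m) (Fin m) ℝ) (hX : Xᵀ = -X) (t : ℝ) :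
    orthogonalGroup (Fin m) ℝ :=
  ⟨NormedSpace.exp (t • X), by
    rw [mem_orthogonalGroup_iff, ← exp_transpose, transpose_smul, hX, smul_neg,
      ← exp_add_of_commute _ _ (Commute.refl (t • X)).neg_right]
    simp⟩

lemma coe_skewRotation (X : Matrix (Fin m) (Fin m) ℝ) (hX : Xᵀ = -X) (t : ℝ) :
    (skewRotation X hX t : Matrix (Fin m) (Fin m) ℝ) = NormedSpace.exp (t • X) := rfl

lemma transpose_coe_skewRotation (X : Matrix (Fin m) (Fin m) ℝ) (hX : Xᵀ = -X) (t : ℝ) :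
    (skewRotation X hX t : Matrix (Fin m) (Fin m) ℝ)ᵀ = NormedSpace.exp (t • -X) := by
  rw [coe_skewRotation, ← exp_transpose, transpose_smul, hX]

lemma skewRotation_add (X : Matrix (Fin m) (Fin m) ℝ) (hX : Xᵀ = -X) (s t : ℝ) :
    skewRotation X hX (s + t) = skewRotation X hX s * skewRotation X hX t := by
  refine Subtype.ext ?_
  change NormedSpace.exp ((s + t) • X) = NormedSpace.exp (s • X) * NormedSpace.exp (t • X)
  rw [add_smul, exp_add_of_commute _ _ (((Commute.refl X).smul_left s).smul_right t)]

/-- The rotated covariance `U S Uᵀ`. -/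
def rotated (S : Matrix (Fin m) (Fin m) ℝ) (U : orthogonalGroup (Fin m) ℝ) :
    Matrix (Fin m) (Fin m) ℝ :=
  (U : Matrix (Fin m) (Fin m) ℝ) * S * (U : Matrix (Fin m) (Fin m) ℝ)ᵀ

@[fun_prop]
lemma continuous_rotated (S : Matrix (Fin m) (Fin m) ℝ) : Continuous (rotated S) := by
  unfold rotated
  fun_prop

section
attribute [local instance] Matrix.linftyOpNormedRing Matrix.linftyOpNormedAlgebra

lemma hasDerivAt_trace_mul_rotated (S N X : Matrix (Fin m) (Fin m) ℝ) (hX : Xᵀ = -X)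
    (U : orthogonalGroup (Fin m) ℝ) :
    HasDerivAt (fun t => (N * rotated S (skewRotation X hX t * U)).trace)
      (N * (X * rotated S U - rotated S U * X)).trace 0 := by
  have h1 := hasDerivAt_exp_smul_const X (0 : ℝ)
  have h2 := hasDerivAt_exp_smul_const (-X) (0 : ℝ)
  rw [zero_smul, NormedSpace.exp_zero, one_mul] at h1 h2
  have h3 := (((h1.mul_const (rotated S U)).mul h2).const_mul N)
  have h4 := (traceLinearMap (Fin m) ℝ ℝ).toContinuousLinearMap.hasFDerivAt.comp_hasDerivAt
    (0 : ℝ) h3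
  have hfun : (fun t => (N * rotated S (skewRotation X hX t * U)).trace) =
      (traceLinearMap (Fin m) ℝ ℝ).toContinuousLinearMap ∘ fun t : ℝ =>
        N * (NormedSpace.exp (t • X) * rotated S U * NormedSpace.exp (t • -X)) := by
    funext t
    simp only [Function.comp_apply, ← transpose_coe_skewRotation X hX, ← coe_skewRotation X hX]
    simp [rotated, Matrix.mul_assoc]
  have hval : (N * (X * rotated S U - rotated S U * X)).trace =
      (traceLinearMap (Fin m) ℝ ℝ).toContinuousLinearMap
        (N * (X * rotated S U * NormedSpace.exp ((0 : ℝ) • -X) +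
          NormedSpace.exp ((0 : ℝ) • X) * rotated S U * -X)) := by
    simp [sub_eq_add_neg]
  rw [hfun, hval]
  exact h4

end

end

section

variable {m : ℕ}

/-- The generator of rotations in the plane spanned by the coordinates `i` and `j`. -/
def planeGenerator (i j : Fin m) : Matrix (Fin m) (Fin m) ℝ := single i j 1 - single j i 1

lemma transpose_planeGenerator (i j : Fin m) : (planeGenerator i j)ᵀ = -planeGenerator i j := by
  simp [planeGenerator]

lemma sum_planeGenerator_mul_mul (P : Matrix (Fin m) (Fin m) ℝ) :
    ∑ i, ∑ j, planeGenerator i j * P * planeGenerator i j = 2 • Pᵀ - (2 * P.trace) • 1 := by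
  have h1 : ∑ i, ∑ j, single i j (P j i) = Pᵀ := (matrix_eq_sum_single Pᵀ).symm
  have h2 : ∑ i, ∑ j, single i i (P j j) = P.trace • (1 : Matrix (Fin m) (Fin m) ℝ) := by
    ext a b
    simp only [Matrix.sum_apply, single_apply, trace, diag, Matrix.smul_apply, one_apply,
      smul_eq_mul]
    by_cases hab : a = b
    · subst hab
      simp
    · rw [if_neg hab, mul_zero]
      refine Finset.sum_eq_zero fun i _ => Finset.sum_eq_zero fun j _ => if_neg ?_
      rintro ⟨rfl, h⟩
      exact hab h
  have h3 (i j : Fin m) : planeGenerator i j * P * planeGenerator i j =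
      single i j (P j i) - single i i (P j j) - (single j j (P i i) - single j i (P i j)) := by
    simp [planeGenerator, sub_mul, mul_sub, single_mul_mul_single]
    abel
  simp only [h3, Finset.sum_sub_distrib, h1, h2]
  rw [Finset.sum_comm (f := fun i j : Fin m => single j j (P i i)),
    Finset.sum_comm (f := fun i j : Fin m => single j i (P i j)), h1, h2, two_mul, add_smul,
    two_smul]
  abel

lemma sum_trace_commutator_mul_commutator (M P : Matrix (Fin m) (Fin m) ℝ) (hP : Pᵀ = P) :
    ∑ i, ∑ j, ((M * planeGenerator i j - planeGenerator i j * M) *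
      (planeGenerator i j * P - P * planeGenerator i j)).trace =
      -(4 * m) * (M * P).trace + 4 * (M.trace * P.trace) := by
  have hterm (X : Matrix (Fin m) (Fin m) ℝ) : ((M * X - X * M) * (X * P - P * X)).trace =
      (M * (X * 1 * X) * P).trace + (M * P * (X * 1 * X)).trace - 2 * (M * (X * P * X)).trace := by
    have e1 : (X * M * (X * P)).trace = (M * (X * P * X)).trace := by
      rw [Matrix.mul_assoc, trace_mul_comm]
      simp only [Matrix.mul_assoc]
    have e2 : (X * M * (P * X)).trace = (M * P * (X * 1 * X)).trace := by
      rw [Matrix.mul_assoc, trace_mul_comm]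
      simp only [Matrix.mul_assoc, Matrix.one_mul]
    simp only [sub_mul, mul_sub, trace_sub, e1, e2]
    simp only [Matrix.mul_assoc, Matrix.one_mul]
    ring
  simp only [hterm, Finset.sum_sub_distrib, Finset.sum_add_distrib, ← Finset.mul_sum,
    ← trace_sum, ← Finset.sum_mul, sum_planeGenerator_mul_mul]
  simp [hP, mul_sub, sub_mul, two_mul, add_mul, add_smul, two_smul, mul_add]
  ring

lemma transpose_rotated {S : Matrix (Fin m) (Fin m) ℝ} (hS : Sᵀ = S)
    (U : orthogonalGroup (Fin m) ℝ) : (rotated S U)ᵀ = rotated S U := by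
  simp [rotated, transpose_mul, hS, Matrix.mul_assoc]

lemma transpose_mul_self_orthogonal (U : orthogonalGroup (Fin m) ℝ) :
    (U : Matrix (Fin m) (Fin m) ℝ)ᵀ * U = 1 :=
  (mem_orthogonalGroup_iff' _ _).mp U.2

lemma trace_rotated (S : Matrix (Fin m) (Fin m) ℝ) (U : orthogonalGroup (Fin m) ℝ) :
    (rotated S U).trace = S.trace := by
  rw [rotated, trace_mul_comm, ← Matrix.mul_assoc, transpose_mul_self_orthogonal, Matrix.one_mul]

/-- The centred linear statistic `tr (M U S Uᵀ) - tr M * tr S / m`. -/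
noncomputable def centredTrace (M S : Matrix (Fin m) (Fin m) ℝ) (U : orthogonalGroup (Fin m) ℝ) :
    ℝ :=
  (M * rotated S U).trace - M.trace * S.trace / m

/-- The squared gradient of `centredTrace M S` along the plane rotations. -/
noncomputable def squaredGradient (M S : Matrix (Fin m) (Fin m) ℝ)
    (U : orthogonalGroup (Fin m) ℝ) : ℝ :=
  ∑ i, ∑ j,
    ((M * planeGenerator i j - planeGenerator i j * M) * rotated S U).trace ^ 2

lemma continuous_trace_mul_rotated (N S : Matrix (Fin m) (Fin m) ℝ) :
    Continuous fun U => (N * rotated S U).trace := by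
  fun_prop

lemma continuous_centredTrace (M S : Matrix (Fin m) (Fin m) ℝ) :
    Continuous (centredTrace M S) :=
  (continuous_trace_mul_rotated M S).sub continuous_const

lemma trace_mul_commutator (M X P : Matrix (Fin m) (Fin m) ℝ) :
    (M * (X * P - P * X)).trace = ((M * X - X * M) * P).trace := by
  rw [mul_sub, sub_mul, trace_sub, trace_sub, Matrix.mul_assoc, Matrix.mul_assoc X,
    trace_mul_comm X, Matrix.mul_assoc M P]

lemma steinIdentity_centredTrace [MeasurableSpace (orthogonalGroup (Fin m) ℝ)]
    [BorelSpace (orthogonalGroup (Fin m) ℝ)] (hm : m ≠ 0)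
    {M S : Matrix (Fin m) (Fin m) ℝ} (hS : Sᵀ = S)
    (μ : Measure (orthogonalGroup (Fin m) ℝ)) [IsProbabilityMeasure μ] [μ.IsMulLeftInvariant] :
    SteinIdentity μ (4 * m) (centredTrace M S) (squaredGradient M S) := by
  intro g g' hg hg'
  have hgc : Continuous g := continuous_iff_continuousAt.mpr fun y => (hg y).continuousAt
  have hYc := continuous_centredTrace M S
  set D : Fin m → Fin m → orthogonalGroup (Fin m) ℝ → ℝ := fun i j U =>
    ((M * planeGenerator i j - planeGenerator i j * M) * rotated S U).trace with hD
  set L : Fin m → Fin m → orthogonalGroup (Fin m) ℝ → ℝ := fun i j U =>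
    ((M * planeGenerator i j - planeGenerator i j * M) *
      (planeGenerator i j * rotated S U - rotated S U * planeGenerator i j)).trace with hL
  have hDc (i j) : Continuous (D i j) := continuous_trace_mul_rotated _ S
  have hLc (i j) : Continuous (L i j) := by fun_prop
  have hcont (i j) : Continuous fun U => L i j U * g (centredTrace M S U) +
      D i j U * (g' (centredTrace M S U) * D i j U) := by fun_prop
  have hzero (i j) : ∫ U, (L i j U * g (centredTrace M S U) +
      D i j U * (g' (centredTrace M S U) * D i j U)) ∂μ = 0 := by
    refine integral_deriv_oneParameter_eq_zero
      (skewRotation_add _ (transpose_planeGenerator i j))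
      (F := fun U => D i j U * g (centredTrace M S U)) (by fun_prop) (hcont i j) fun U => ?_
    have h0 : skewRotation _ (transpose_planeGenerator i j) 0 = 1 := by
      simpa using skewRotation_add _ (transpose_planeGenerator i j) 0 0
    have hY := (hasDerivAt_trace_mul_rotated S M _ (transpose_planeGenerator i j) U).sub_const
      (M.trace * S.trace / m)
    rw [trace_mul_commutator] at hY
    have hgY := (hg (centredTrace M S
      (skewRotation _ (transpose_planeGenerator i j) 0 * U))).comp (0 : ℝ) hY
    simpa [h0, hD, hL, centredTrace] using (hasDerivAt_trace_mul_rotated S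
      (M * planeGenerator i j - planeGenerator i j * M) _
      (transpose_planeGenerator i j) U).fun_mul hgY
  have hsum (U : orthogonalGroup (Fin m) ℝ) :
      ∑ i, ∑ j, (L i j U * g (centredTrace M S U) +
        D i j U * (g' (centredTrace M S U) * D i j U)) =
      squaredGradient M S U * g' (centredTrace M S U) -
        4 * m * (centredTrace M S U * g (centredTrace M S U)) := by
    have hLsum : ∑ i, ∑ j, L i j U = -(4 * m) * centredTrace M S U := by
      rw [hL, sum_trace_commutator_mul_commutator M _ (transpose_rotated hS U), trace_rotated,
        centredTrace]
      field_simp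
      ring
    have hDsum : ∑ i, ∑ j, D i j U * (g' (centredTrace M S U) * D i j U) =
        squaredGradient M S U * g' (centredTrace M S U) := by
      simp only [squaredGradient, Finset.sum_mul]
      exact Finset.sum_congr rfl fun i _ => Finset.sum_congr rfl fun j _ => by ring
    simp only [Finset.sum_add_distrib, ← Finset.sum_mul, hLsum, hDsum]
    ring
  have hΓc : Continuous (squaredGradient M S) := by
    unfold squaredGradient
    fun_prop
  have htot : ∫ U, (squaredGradient M S U * g' (centredTrace M S U) -
      4 * m * (centredTrace M S U * g (centredTrace M S U))) ∂μ = 0 := by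
    simp only [← hsum]
    rw [integral_finsetSum _ fun i _ => integrable_of_continuous_compactSpace
      (continuous_finsetSum _ fun j _ => hcont i j)]
    refine Finset.sum_eq_zero fun i _ => ?_
    rw [integral_finsetSum _ fun j _ => integrable_of_continuous_compactSpace (hcont i j)]
    exact Finset.sum_eq_zero fun j _ => hzero i j
  rw [integral_sub (integrable_of_continuous_compactSpace (by fun_prop))
    (integrable_of_continuous_compactSpace (by fun_prop)), integral_const_mul] at htot
  linarith

lemma squaredGradient_nonneg (M S : Matrix (Fin m) (Fin m) ℝ) (U : orthogonalGroup (Fin m) ℝ) :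
    0 ≤ squaredGradient M S U :=
  Finset.sum_nonneg fun _ _ => Finset.sum_nonneg fun _ _ => sq_nonneg _

end

lemma trace_transpose_mul_self_eq_sum {k l : ℕ} (B : Matrix (Fin k) (Fin l) ℝ) :
    (Bᵀ * B).trace = ∑ j, ∑ i, B i j ^ 2 := by
  simp [trace, mul_apply, sq]

lemma trace_transpose_mul_self_mul_le {k l p : ℕ} (S : Matrix (Fin k) (Fin l) ℝ)
    (B : Matrix (Fin l) (Fin p) ℝ) :
    ((S * B)ᵀ * (S * B)).trace ≤ matrixOpNorm S ^ 2 * (Bᵀ * B).trace := by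
  rw [trace_transpose_mul_self_eq_sum, trace_transpose_mul_self_eq_sum, Finset.mul_sum]
  refine Finset.sum_le_sum fun j _ => ?_
  have h := (LinearMap.toContinuousLinearMap (toEuclideanLin S)).le_opNorm
    (WithLp.toLp 2 fun i => B i j)
  have h2 := pow_le_pow_left₀ (norm_nonneg _) h 2
  rw [mul_pow, EuclideanSpace.real_norm_sq_eq, EuclideanSpace.real_norm_sq_eq] at h2
  simpa [matrixOpNorm, mulVec, dotProduct, mul_apply] using h2

lemma trace_transpose_mul_self_orthogonal_mul {m p : ℕ} (U : Matrix (Fin m) (Fin m) ℝ)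
    (hU : Uᵀ * U = 1) (B : Matrix (Fin m) (Fin p) ℝ) :
    ((U * B)ᵀ * (U * B)).trace = (Bᵀ * B).trace := by
  rw [transpose_mul, Matrix.mul_assoc, ← Matrix.mul_assoc Uᵀ, hU, Matrix.one_mul]

lemma squaredGradient_le {m : ℕ} {M S : Matrix (Fin m) (Fin m) ℝ} (hM : Mᵀ = M) (hS : Sᵀ = S)
    (U : orthogonalGroup (Fin m) ℝ) :
    squaredGradient M S U ≤ 16 * (matrixOpNorm S ^ 2 * (Mᵀ * M).trace) := by
  set Q := rotated S U * M with hQ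
  have hMP : M * rotated S U = Qᵀ := by rw [hQ, transpose_mul, hM, transpose_rotated hS]
  have hterm (i j : Fin m) :
      ((M * planeGenerator i j - planeGenerator i j * M) * rotated S U).trace =
        2 * (Q j i - Q i j) := by
    rw [sub_mul, trace_sub, Matrix.mul_assoc, trace_mul_comm M, Matrix.mul_assoc, ← hQ,
      Matrix.mul_assoc, hMP, planeGenerator]
    simp [sub_mul, trace_single_mul]
    ring
  have hbound : squaredGradient M S U ≤ ∑ i, ∑ j, (8 * Q j i ^ 2 + 8 * Q i j ^ 2) := by
    refine Finset.sum_le_sum fun i _ => Finset.sum_le_sum fun j _ => ?_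
    rw [hterm]
    nlinarith [sq_nonneg (Q j i + Q i j)]
  have hsum : ∑ i, ∑ j, (8 * Q j i ^ 2 + 8 * Q i j ^ 2) = 16 * (Qᵀ * Q).trace := by
    simp only [Finset.sum_add_distrib, ← Finset.mul_sum]
    rw [Finset.sum_comm (f := fun i j => Q i j ^ 2), trace_transpose_mul_self_eq_sum]
    ring
  have hQ' : Q = U * (S * ((U : Matrix (Fin m) (Fin m) ℝ)ᵀ * M)) := by
    simp only [hQ, rotated, Matrix.mul_assoc]
  have hUU : ((U : Matrix (Fin m) (Fin m) ℝ)ᵀ)ᵀ * (U : Matrix (Fin m) (Fin m) ℝ)ᵀ = 1 := by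
    rw [transpose_transpose]
    exact (mem_orthogonalGroup_iff _ _).mp U.2
  have hfrob : (Qᵀ * Q).trace ≤ matrixOpNorm S ^ 2 * (Mᵀ * M).trace := by
    rw [hQ', trace_transpose_mul_self_orthogonal_mul _ (transpose_mul_self_orthogonal U),
      ← trace_transpose_mul_self_orthogonal_mul _ hUU M]
    exact trace_transpose_mul_self_mul_le _ _
  linarith

lemma trace_gram_mul_gram_le {n m : ℕ} (A : Matrix (Fin n) (Fin m) ℝ) :
    ((Aᵀ * A)ᵀ * (Aᵀ * A)).trace ≤ n * matrixOpNorm (A * Aᵀ) ^ 2 := by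
  have h := trace_transpose_mul_self_mul_le (A * Aᵀ) (1 : Matrix (Fin n) (Fin n) ℝ)
  have he : ((Aᵀ * A)ᵀ * (Aᵀ * A)).trace = ((A * Aᵀ)ᵀ * (A * Aᵀ)).trace := by
    simp only [transpose_mul, transpose_transpose, Matrix.mul_assoc]
    rw [trace_mul_comm]
    simp only [Matrix.mul_assoc]
  rw [he]
  simpa [mul_comm] using h

lemma eq_zero_of_matrixOpNorm_eq_zero {n m : ℕ} {A : Matrix (Fin n) (Fin m) ℝ}
    (h : matrixOpNorm A = 0) : A = 0 := by
  simpa [matrixOpNorm] using h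

lemma matrixOpNorm_nonneg {n m : ℕ} (A : Matrix (Fin n) (Fin m) ℝ) : 0 ≤ matrixOpNorm A :=
  norm_nonneg _

lemma eq_zero_of_matrixOpNorm_self_mul_transpose_eq_zero {n m : ℕ} {A : Matrix (Fin n) (Fin m) ℝ}
    (h : matrixOpNorm (A * Aᵀ) = 0) : A = 0 := by
  rw [← self_mul_conjTranspose_eq_zero, conjTranspose_eq_transpose_of_trivial]
  exact eq_zero_of_matrixOpNorm_eq_zero h

lemma trace_error_eq_centredTrace {n m : ℕ} (A : Matrix (Fin n) (Fin m) ℝ)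
    (S : Matrix (Fin m) (Fin m) ℝ) (U : orthogonalGroup (Fin m) ℝ) :
    (A * (U : Matrix (Fin m) (Fin m) ℝ) * S *
      (U : Matrix (Fin m) (Fin m) ℝ)ᵀ * Aᵀ).trace / (n : ℝ) -
      (S.trace / (m : ℝ)) * ((A * Aᵀ).trace / (n : ℝ)) = centredTrace (Aᵀ * A) S U / n := by
  have h1 : (A * (U : Matrix (Fin m) (Fin m) ℝ) * S * (U : Matrix (Fin m) (Fin m) ℝ)ᵀ * Aᵀ).trace =
      (Aᵀ * A * rotated S U).trace := by
    rw [trace_mul_comm]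
    simp only [rotated, Matrix.mul_assoc]
  rw [h1, trace_mul_comm A, centredTrace]
  ring

/-- Corollary of the supplementary material (concentration of measure for a
randomly rotated mechanism): there is a universal constant `κ > 0` such that for
every `m ≥ 2`, symmetric positive semidefinite `Σ`, matrix `A` and `ε > 0`, a
Haar-distributed orthogonal `U` satisfies
`|τ_n(A U Σ Uᵀ Aᵀ) - τ_m(Σ) τ_n(A Aᵀ)| ≤ 2ε ‖Σ‖ ‖A Aᵀ‖`
with probability at least `1 - exp(-κ (m-1) ε²)`. -/
theorem trace_condition_concentration :
    ∃ κ : ℝ, 0 < κ ∧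
      ∀ (m n : ℕ), 2 ≤ m →
      ∀ S : Matrix (Fin m) (Fin m) ℝ, S.IsSymm → S.PosSemidef →
      ∀ (A : Matrix (Fin n) (Fin m) ℝ) (ε : ℝ), 0 < ε →
      let _i : MeasurableSpace (Matrix.orthogonalGroup (Fin m) ℝ) := borel _
      ∀ μ : Measure (Matrix.orthogonalGroup (Fin m) ℝ),
        μ.IsHaarMeasure → IsProbabilityMeasure μ →
        ENNReal.ofReal (1 - Real.exp (-κ * ((m : ℝ) - 1) * ε ^ 2)) ≤
          μ {U : Matrix.orthogonalGroup (Fin m) ℝ |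
              abs ((A * (U : Matrix (Fin m) (Fin m) ℝ) * S *
                    (U : Matrix (Fin m) (Fin m) ℝ)ᵀ * Aᵀ).trace / (n : ℝ) -
                  (S.trace / (m : ℝ)) * ((A * Aᵀ).trace / (n : ℝ))) ≤
                2 * ε * matrixOpNorm S * matrixOpNorm (A * Aᵀ)} := by
  refine ⟨1 / 8, by norm_num, ?_⟩
  intro m n hm S hS _ A ε hε _i μ hμ hprob
  have : BorelSpace (Matrix.orthogonalGroup (Fin m) ℝ) := ⟨rfl⟩
  simp only [trace_error_eq_centredTrace]
  have hdeg (h : ∀ U, centredTrace (Aᵀ * A) S U / n = 0) :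
      ENNReal.ofReal (1 - Real.exp (-(1 / 8) * ((m : ℝ) - 1) * ε ^ 2)) ≤
        μ {U | |centredTrace (Aᵀ * A) S U / n| ≤
          2 * ε * matrixOpNorm S * matrixOpNorm (A * Aᵀ)} := by
    have huniv : {U | |centredTrace (Aᵀ * A) S U / n| ≤
        2 * ε * matrixOpNorm S * matrixOpNorm (A * Aᵀ)} = Set.univ := by
      refine Set.eq_univ_of_forall fun U => ?_
      rw [Set.mem_ofPred_eq, h U, abs_zero]
      exact mul_nonneg (mul_nonneg (by positivity) (matrixOpNorm_nonneg _)) (matrixOpNorm_nonneg _)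
    rw [huniv, measure_univ, ← ENNReal.ofReal_one]
    exact ENNReal.ofReal_le_ofReal (by linarith [Real.exp_pos (-(1 / 8) * ((m : ℝ) - 1) * ε ^ 2)])
  rcases Nat.eq_zero_or_pos n with hn | hn
  · exact hdeg fun U => by simp [hn]
  rcases (matrixOpNorm_nonneg S).eq_or_lt with hs | hs
  · exact hdeg fun U => by
      simp [eq_zero_of_matrixOpNorm_eq_zero hs.symm, centredTrace, rotated]
  rcases (matrixOpNorm_nonneg (A * Aᵀ)).eq_or_lt with ha | ha
  · exact hdeg fun U => by
      simp [eq_zero_of_matrixOpNorm_self_mul_transpose_eq_zero ha.symm, centredTrace]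
  set s := matrixOpNorm S
  set a := matrixOpNorm (A * Aᵀ)
  have hn' : (1 : ℝ) ≤ n := by exact_mod_cast hn
  have hm' : (2 : ℝ) ≤ m := by exact_mod_cast hm
  have hYc := continuous_centredTrace (Aᵀ * A) S
  obtain ⟨B, hB⟩ := isCompact_univ.exists_bound_of_continuousOn hYc.continuousOn
  have hΓ (U : orthogonalGroup (Fin m) ℝ) :
      squaredGradient (Aᵀ * A) S U ≤ 16 * n * s ^ 2 * a ^ 2 := by
    have h1 := squaredGradient_le (M := Aᵀ * A) (by simp) hS U
    have h2 := mul_le_mul_of_nonneg_left (trace_gram_mul_gram_le A) (sq_nonneg s)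
    linarith
  have hconc := (steinIdentity_centredTrace (M := Aᵀ * A) (by omega) hS μ).concentration
    (t := 2 * ε * s * a * n) (by positivity) (by positivity) (by positivity)
    hYc.measurable (fun U => hB U (Set.mem_univ U)) (squaredGradient_nonneg _ _) hΓ
  have hset : {U | |centredTrace (Aᵀ * A) S U / n| ≤ 2 * ε * s * a} =
      {U | |centredTrace (Aᵀ * A) S U| ≤ 2 * ε * s * a * n} := by
    ext U
    rw [Set.mem_ofPred_eq, Set.mem_ofPred_eq, abs_div, Nat.abs_cast,
      div_le_iff₀ (by linarith)]
  rw [hset, ← ofReal_measureReal]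
  refine ENNReal.ofReal_le_ofReal (le_trans ?_ hconc)
  have hx : 4 * (m : ℝ) * (2 * ε * s * a * n) ^ 2 / (16 * n * s ^ 2 * a ^ 2) = m * n * ε ^ 2 := by
    field_simp
    ring
  rw [hx]
  have : ((m : ℝ) - 1) * ε ^ 2 ≤ m * n * ε ^ 2 := by
    refine mul_le_mul_of_nonneg_right ?_ (sq_nonneg ε)
    nlinarith
  have := Real.exp_le_exp.mpr
    (show -(m * n * ε ^ 2) / 8 ≤ -(1 / 8) * ((m : ℝ) - 1) * ε ^ 2 by linarith)
  linarith
end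

section
/- There exists a constant κ > 0, independent of all other data, such that the following holds: for every m ≥ 2, every C : ℤ → ℝ with C(−k) = C(k) for all k, Σ_{k∈ℤ} |C(k)| < ∞, C(0) > 0, and with nonnegative spectral density, i.e. S(ν) := Σ_{k∈ℤ} C(k)·cos(2π·k·ν) ≥ 0 for all ν ∈ [−1/2, 1/2], every nonzero vector b ∈ ℝ^m, and every ε > 0, if Σ denotes the m × m Toeplitz matrix with entries Σ_{jk} = C(j − k) and U is drawn from the Haar probability measure on the orthogonal group O(m), then with probability at least 1 − exp(−κ·(m−1)·ε²) one has |bᵀ·U·Σ·Uᵀ·b / (C(0)·‖b‖²) − 1| ≤ (2ε / C(0)) · sup_{ν ∈ [−1/2,1/2]} S(ν), where ‖b‖² = Σ_i b_i². -/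
open MeasureTheory Matrix
open ProbabilityTheory
open scoped RealInnerProductSpace

/-- A second order upper bound for `1 / (1 - y)` near the origin. -/
lemma inv_one_sub_le_exp {y : ℝ} (hy : |y| ≤ 1 / 2) : (1 - y)⁻¹ ≤ Real.exp (y + y ^ 2) := by
  have h := (abs_le.mp (Real.abs_log_sub_add_sum_range_le (x := y) (by linarith) 4)).1
  have h0 := abs_nonneg y
  have hq : |y| ^ 2 ≤ 1 / 4 := by nlinarith
  have herr : |y| ^ 5 / (1 - |y|) ≤ y ^ 2 / 4 := by
    rw [div_le_iff₀ (by linarith), ← sq_abs y]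
    have h1 : |y| ^ 5 ≤ |y| ^ 2 * (1 / 8) := by
      rw [show |y| ^ 5 = |y| ^ 2 * |y| ^ 3 by ring]
      exact mul_le_mul_of_nonneg_left (by nlinarith) (sq_nonneg _)
    nlinarith [sq_nonneg |y|]
  obtain ⟨h1, h2⟩ := abs_le.mp hy
  simp only [Finset.sum_range_succ, Finset.range_zero, Finset.sum_empty] at h
  norm_num at h
  rw [← Real.log_le_iff_le_exp (by rw [inv_pos]; linarith), Real.log_inv]
  have h3 : y ^ 3 ≤ y ^ 2 / 2 := by nlinarith [sq_nonneg y]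
  have h4 : y ^ 4 ≤ y ^ 2 / 4 := by nlinarith [sq_nonneg y, sq_abs y]
  linarith [sq_nonneg y]

/-- A second order lower bound for `1 / (1 - y)` near the origin. -/
lemma exp_le_inv_one_sub {y : ℝ} (hy : |y| ≤ 1 / 2) :
    Real.exp (y + y ^ 2 / 8) ≤ (1 - y)⁻¹ := by
  have h := (abs_le.mp (Real.abs_log_sub_add_sum_range_le (x := y) (by linarith) 5)).2
  have h0 := abs_nonneg y
  have hq : |y| ^ 2 ≤ 1 / 4 := by nlinarith
  have herr : |y| ^ 6 / (1 - |y|) ≤ y ^ 2 / 8 := by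
    rw [div_le_iff₀ (by linarith), ← sq_abs y]
    have h1 : |y| ^ 6 ≤ |y| ^ 2 * (1 / 16) := by
      rw [show |y| ^ 6 = |y| ^ 2 * (|y| ^ 2 * |y| ^ 2) by ring]
      exact mul_le_mul_of_nonneg_left (by nlinarith) (sq_nonneg _)
    nlinarith [sq_nonneg |y|]
  obtain ⟨h1, h2⟩ := abs_le.mp hy
  simp only [Finset.sum_range_succ, Finset.range_zero, Finset.sum_empty] at h
  norm_num at h
  rw [← Real.le_log_iff_exp_le (by rw [inv_pos]; linarith), Real.log_inv]
  have h3 : -(y ^ 2 / 2) ≤ y ^ 3 := by nlinarith [sq_nonneg y]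
  have h5 : -(y ^ 2 / 8) ≤ y ^ 5 := by
    have : y ^ 4 ≤ y ^ 2 / 4 := by nlinarith [sq_nonneg y, sq_abs y]
    nlinarith [sq_nonneg (y ^ 2)]
  linarith [sq_nonneg y, sq_nonneg (y ^ 2), show y ^ 4 = (y ^ 2) ^ 2 by ring]

lemma integrable_exp_mul_sq_gaussianReal {a : ℝ} (ha : 2 * a < 1) :
    Integrable (fun x : ℝ => Real.exp (a * x ^ 2)) (gaussianReal 0 1) := by
  rw [gaussianReal_of_var_ne_zero _ one_ne_zero,
    integrable_withDensity_iff (measurable_gaussianPDF _ _) (by simp [gaussianPDF])]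
  have := (integrable_exp_neg_mul_sq (b := 1 / 2 - a) (by linarith)).const_mul (√(2 * Real.pi))⁻¹
  refine this.congr (ae_of_all _ fun x => ?_)
  simp only [toReal_gaussianPDF, gaussianPDFReal]
  rw [mul_left_comm, ← Real.exp_add]
  norm_num
  left
  ring_nf

lemma integral_exp_mul_sq_gaussianReal {a : ℝ} (ha : 2 * a < 1) :
    ∫ x : ℝ, Real.exp (a * x ^ 2) ∂(gaussianReal 0 1) = √((1 - 2 * a)⁻¹) := by
  rw [integral_gaussianReal_eq_integral_smul one_ne_zero]
  have h : ∀ x : ℝ, gaussianPDFReal 0 1 x • Real.exp (a * x ^ 2)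
      = (√(2 * Real.pi))⁻¹ * Real.exp (-(1 / 2 - a) * x ^ 2) := fun x => by
    simp only [gaussianPDFReal, smul_eq_mul]
    rw [mul_assoc, ← Real.exp_add]
    norm_num
    left
    ring_nf
  simp_rw [h]
  rw [integral_const_mul, integral_gaussian, ← Real.sqrt_inv, ← Real.sqrt_mul (by positivity)]
  congr 1
  have : 1 - 2 * a ≠ 0 := by linarith
  have : 1 / 2 - a ≠ 0 := by linarith
  field_simp

section DiagonalForm

variable {ι E : Type*} [Fintype ι] [NormedAddCommGroup E] [InnerProductSpace ℝ E]

/-- The quadratic form `∑ i, c i * ⟪b i, x⟫ ^ 2`, diagonal in the orthonormal basis `b`. -/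
noncomputable def diagForm (b : OrthonormalBasis ι ℝ E) (c : ι → ℝ) (x : E) : ℝ :=
  ∑ i, c i * ⟪b i, x⟫ ^ 2

lemma continuous_diagForm (b : OrthonormalBasis ι ℝ E) (c : ι → ℝ) :
    Continuous (diagForm b c) := by
  unfold diagForm
  fun_prop

lemma diagForm_smul (b : OrthonormalBasis ι ℝ E) (c : ι → ℝ) (r : ℝ) (x : E) :
    diagForm b c (r • x) = r ^ 2 * diagForm b c x := by
  simp only [diagForm, inner_smul_right, Finset.mul_sum]
  exact Finset.sum_congr rfl fun i _ => by ring

lemma diagForm_neg (b : OrthonormalBasis ι ℝ E) (c : ι → ℝ) (x : E) :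
    diagForm b (-c) x = -diagForm b c x := by
  simp [diagForm]

lemma diagForm_const (b : OrthonormalBasis ι ℝ E) (r : ℝ) (x : E) :
    diagForm b (fun _ => r) x = r * ‖x‖ ^ 2 := by
  simp only [diagForm, ← Finset.mul_sum]
  rw [← b.sum_sq_norm_inner_right x]
  simp

lemma diagForm_const_mul (b : OrthonormalBasis ι ℝ E) (r : ℝ) (c : ι → ℝ) (x : E) :
    diagForm b (fun i => r * c i) x = r * diagForm b c x := by
  simp only [diagForm, Finset.mul_sum, mul_assoc]

lemma diagForm_sub_const (b : OrthonormalBasis ι ℝ E) (c : ι → ℝ) (r : ℝ) (x : E) :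
    diagForm b (fun i => c i - r) x = diagForm b c x - r * ‖x‖ ^ 2 := by
  rw [← diagForm_const b]
  simp [diagForm, sub_mul]

lemma abs_diagForm_le (b : OrthonormalBasis ι ℝ E) {c : ι → ℝ} {L : ℝ} (hc : ∀ i, |c i| ≤ L)
    (x : E) : |diagForm b c x| ≤ L * ‖x‖ ^ 2 := by
  rw [← diagForm_const b]
  refine (Finset.abs_sum_le_sum_abs _ _).trans (Finset.sum_le_sum fun i _ => ?_)
  rw [abs_mul, abs_of_nonneg (sq_nonneg ⟪b i, x⟫)]
  exact mul_le_mul_of_nonneg_right (hc i) (sq_nonneg _)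

variable [MeasurableSpace E] [BorelSpace E] [FiniteDimensional ℝ E]

lemma integrable_exp_diagForm (b : OrthonormalBasis ι ℝ E) {a : ι → ℝ} (ha : ∀ i, 2 * a i < 1) :
    Integrable (fun x => Real.exp (diagForm b a x)) (stdGaussian E) := by
  classical
  rw [stdGaussian_eq_map_pi_orthonormalBasis b, integrable_map_measure
    (continuous_diagForm b a).rexp.aestronglyMeasurable (Measurable.aemeasurable (by fun_prop))]
  have := Integrable.fintype_prod (μ := fun _ : ι => gaussianReal 0 1)
    (f := fun i x => Real.exp (a i * x ^ 2))
    fun i => integrable_exp_mul_sq_gaussianReal (ha i)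
  refine this.congr (ae_of_all _ fun x => ?_)
  simp [diagForm, Real.exp_sum, inner_sum, inner_smul_right, b.inner_eq_ite]

lemma integral_exp_diagForm (b : OrthonormalBasis ι ℝ E) {a : ι → ℝ} (ha : ∀ i, 2 * a i < 1) :
    ∫ x, Real.exp (diagForm b a x) ∂(stdGaussian E) = ∏ i, √((1 - 2 * a i)⁻¹) := by
  classical
  rw [stdGaussian_eq_map_pi_orthonormalBasis b, integral_map (Measurable.aemeasurable (by fun_prop))
    (continuous_diagForm b a).rexp.aestronglyMeasurable]
  simp_rw [← fun i => integral_exp_mul_sq_gaussianReal (ha i)]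
  rw [← integral_fintype_prod_eq_prod]
  refine integral_congr_ae (ae_of_all _ fun x => ?_)
  simp [diagForm, Real.exp_sum, inner_sum, inner_smul_right, b.inner_eq_ite]

lemma integral_exp_diagForm_le (b : OrthonormalBasis ι ℝ E) {a : ι → ℝ}
    (ha : ∀ i, |2 * a i| ≤ 1 / 2) :
    ∫ x, Real.exp (diagForm b a x) ∂(stdGaussian E) ≤ Real.exp (∑ i, (a i + 2 * a i ^ 2)) := by
  rw [integral_exp_diagForm b fun i => by linarith [(abs_le.mp (ha i)).2], Real.exp_sum]
  refine Finset.prod_le_prod (fun i _ => Real.sqrt_nonneg _) fun i _ => ?_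
  rw [Real.sqrt_le_left (Real.exp_pos _).le, ← Real.exp_nat_mul]
  refine (inv_one_sub_le_exp (ha i)).trans_eq ?_
  push_cast
  ring_nf

lemma le_integral_exp_diagForm (b : OrthonormalBasis ι ℝ E) {a : ι → ℝ}
    (ha : ∀ i, |2 * a i| ≤ 1 / 2) :
    Real.exp (∑ i, (a i + a i ^ 2 / 4)) ≤ ∫ x, Real.exp (diagForm b a x) ∂(stdGaussian E) := by
  rw [integral_exp_diagForm b fun i => by linarith [(abs_le.mp (ha i)).2], Real.exp_sum]
  refine Finset.prod_le_prod (fun i _ => (Real.exp_pos _).le) fun i _ => ?_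
  refine Real.le_sqrt_of_sq_le ?_
  rw [← Real.exp_nat_mul]
  refine le_trans (le_of_eq ?_) (exp_le_inv_one_sub (ha i))
  push_cast
  ring_nf

end DiagonalForm

section GaussianForm

variable {ι E : Type*} [Fintype ι] [NormedAddCommGroup E] [InnerProductSpace ℝ E]
  [MeasurableSpace E] [BorelSpace E] [FiniteDimensional ℝ E]

lemma stdGaussian_real_le_diagForm_le (b : OrthonormalBasis ι ℝ E) {c : ι → ℝ} {L s : ℝ}
    (hsum : ∑ i, c i = 0) (hc : ∀ i, |c i| ≤ L) (hs : 0 < s) (hsL : s ≤ L) :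
    (stdGaussian E).real {x | s * ‖x‖ ^ 2 ≤ diagForm b c x} ≤
      Real.exp (-(Fintype.card ι * s ^ 2 / (32 * L ^ 2))) := by
  have hL : 0 < L := hs.trans_le hsL
  set t : ℝ := s / (16 * L ^ 2) with ht
  have ht0 : 0 < t := by positivity
  have htL : t * L ≤ 1 / 16 := by
    rw [ht, div_mul_eq_mul_div, div_le_iff₀ (by positivity)]
    nlinarith
  have hcs : ∀ i, |c i - s| ≤ 2 * L := fun i => by
    have := abs_le.mp (hc i)
    rw [abs_le]
    constructor <;> linarith
  have ha : ∀ i, |2 * (t * (c i - s))| ≤ 1 / 2 := fun i => by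
    rw [abs_mul, abs_mul, abs_of_pos ht0, abs_two]
    nlinarith [mul_le_mul_of_nonneg_left (hcs i) ht0.le]
  have hexpI := integrable_exp_diagForm b (a := fun i => t * (c i - s))
    fun i => by linarith [(abs_le.mp (ha i)).2]
  have hmarkov := mul_meas_ge_le_integral_of_nonneg
    (ae_of_all _ fun x => (Real.exp_pos _).le) hexpI 1
  have hmgf := integral_exp_diagForm_le b ha
  have hset : {x : E | 1 ≤ Real.exp (diagForm b (fun i => t * (c i - s)) x)} =
      {x | s * ‖x‖ ^ 2 ≤ diagForm b c x} := by
    ext x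
    simp only [Set.mem_ofPred_eq, Real.one_le_exp_iff, diagForm_const_mul, diagForm_sub_const]
    rw [mul_nonneg_iff_of_pos_left ht0, sub_nonneg]
  rw [hset, one_mul] at hmarkov
  refine (hmarkov.trans hmgf).trans (Real.exp_le_exp.mpr ?_)
  have hterm : ∀ i, t * (c i - s) + 2 * (t * (c i - s)) ^ 2 ≤
      t * c i + (-(t * s) + 2 * t ^ 2 * (2 * L) ^ 2) := fun i => by
    have h1 : (c i - s) ^ 2 ≤ (2 * L) ^ 2 := sq_le_sq' (abs_le.mp (hcs i)).1 (abs_le.mp (hcs i)).2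
    nlinarith [mul_le_mul_of_nonneg_left h1 (sq_nonneg t)]
  refine (Finset.sum_le_sum fun i _ => hterm i).trans (le_of_eq ?_)
  rw [Finset.sum_add_distrib, ← Finset.mul_sum, hsum, Finset.sum_const, Finset.card_univ,
    nsmul_eq_mul, ht]
  field_simp
  ring

lemma le_stdGaussian_real_diagForm_nonneg (b : OrthonormalBasis ι ℝ E) {c : ι → ℝ}
    (hsum : ∑ i, c i = 0) :
    1 / 2 ^ 17 ≤ (stdGaussian E).real {x | 0 ≤ diagForm b c x} := by
  rcases eq_or_ne c 0 with rfl | hne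
  · simp [diagForm]
    norm_num
  set V : ℝ := ∑ i, c i ^ 2 with hV
  have hVpos : 0 < V := by
    obtain ⟨i, hi⟩ := Function.ne_iff.mp hne
    exact Finset.sum_pos' (fun i _ => sq_nonneg _) ⟨i, Finset.mem_univ _, by
      have : c i ≠ 0 := hi
      positivity⟩
  set t : ℝ := 1 / (8 * √V) with ht
  have ht0 : 0 < t := by positivity
  have htV : t ^ 2 * V = 1 / 64 := by
    rw [ht, div_pow, mul_pow, Real.sq_sqrt hVpos.le]
    field_simp
    norm_num
  have hci : ∀ i, |t * c i| ≤ 1 / 8 := fun i => by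
    refine abs_le_of_sq_le_sq ?_ (by norm_num)
    have : c i ^ 2 ≤ V := Finset.single_le_sum (f := fun i => c i ^ 2)
      (fun i _ => sq_nonneg _) (Finset.mem_univ i)
    nlinarith [mul_le_mul_of_nonneg_left this (sq_nonneg t)]
  have ha1 : ∀ i, |2 * (t * c i)| ≤ 1 / 2 := fun i => by
    rw [abs_mul, abs_two]
    linarith [hci i]
  have ha2 : ∀ i, |2 * (2 * t * c i)| ≤ 1 / 2 := fun i => by
    rw [mul_assoc, abs_mul, abs_mul, abs_two]
    linarith [hci i]
  have hlow := le_integral_exp_diagForm b ha1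
  have hupp := integral_exp_diagForm_le b ha2
  have hexp1 := integrable_exp_diagForm b (a := fun i => t * c i)
    fun i => by linarith [(abs_le.mp (ha1 i)).2]
  have hexp2 := integrable_exp_diagForm b (a := fun i => 2 * t * c i)
    fun i => by linarith [(abs_le.mp (ha2 i)).2]
  have hs1 : ∑ i, (t * c i + (t * c i) ^ 2 / 4) = 1 / 256 := by
    simp_rw [mul_pow, mul_div_assoc]
    rw [Finset.sum_add_distrib, ← Finset.mul_sum, ← Finset.mul_sum, ← Finset.sum_div, hsum, ← hV]
    linarith
  have hs2 : ∑ i, (2 * t * c i + 2 * (2 * t * c i) ^ 2) = 1 / 8 := by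
    simp_rw [mul_pow]
    rw [Finset.sum_add_distrib, ← Finset.mul_sum, ← Finset.mul_sum, ← Finset.mul_sum, hsum, ← hV]
    linarith
  rw [hs1] at hlow
  rw [hs2] at hupp
  have hmeas : MeasurableSet {x : E | 0 ≤ diagForm b c x} :=
    measurableSet_le measurable_const (continuous_diagForm b c).measurable
  have hpt : ∀ x : E, Real.exp (diagForm b (fun i => t * c i) x) ≤
      1 + (256 * {x : E | 0 ≤ diagForm b c x}.indicator (fun _ => (1 : ℝ)) x +
        1 / 1024 * Real.exp (diagForm b (fun i => 2 * t * c i) x)) := fun x => by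
    rw [diagForm_const_mul, diagForm_const_mul, mul_assoc, two_mul, Real.exp_add]
    set z := Real.exp (t * diagForm b c x) with hz
    by_cases hx : 0 ≤ diagForm b c x
    · rw [Set.indicator_of_mem (by exact hx)]
      nlinarith [sq_nonneg (z - 512)]
    · rw [Set.indicator_of_notMem (by exact hx)]
      have : z ≤ 1 := Real.exp_le_one_iff.mpr (by nlinarith)
      nlinarith [sq_nonneg z]
  have hind : Integrable ({x : E | 0 ≤ diagForm b c x}.indicator fun _ => (1 : ℝ))
      (stdGaussian E) := (integrable_const 1).indicator hmeas
  have hI := integral_mono hexp1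
    ((integrable_const 1).add ((hind.const_mul 256).add (hexp2.const_mul (1 / 1024)))) hpt
  rw [integral_add' (integrable_const 1) ((hind.const_mul 256).add (hexp2.const_mul (1 / 1024))),
    integral_add' (hind.const_mul 256) (hexp2.const_mul (1 / 1024)), integral_const_mul,
    integral_const_mul, integral_indicator_const _ hmeas] at hI
  simp only [integral_const, probReal_univ, smul_eq_mul, mul_one] at hI
  have h1 := Real.add_one_le_exp (1 / 256 : ℝ)
  have h2 : Real.exp (1 / 8) ≤ 2 := by
    have := Real.exp_bound_div_one_sub_of_interval (x := 1 / 8) (by norm_num) (by norm_num)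
    norm_num at this ⊢
    linarith
  norm_num at *
  linarith

end GaussianForm

section SphereUniform

variable {E : Type*} [NormedAddCommGroup E] [InnerProductSpace ℝ E]
  [MeasurableSpace E] [BorelSpace E] [FiniteDimensional ℝ E]

variable (E) in
/-- The uniform probability measure on the unit sphere of `E`, as a measure on `E`: the law of
a normalized standard Gaussian vector. -/
noncomputable def sphereUniform : Measure E :=
  (stdGaussian E).map fun x => ‖x‖⁻¹ • x

lemma measurable_normalize : Measurable fun x : E => ‖x‖⁻¹ • x :=
  measurable_norm.inv.smul measurable_id

instance isProbabilityMeasure_sphereUniform : IsProbabilityMeasure (sphereUniform E) :=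
  Measure.isProbabilityMeasure_map measurable_normalize.aemeasurable

lemma measurePreserving_sphereUniform (f : E ≃ₗᵢ[ℝ] E) :
    MeasurePreserving f (sphereUniform E) (sphereUniform E) := by
  refine ⟨f.continuous.measurable, ?_⟩
  conv_rhs => rw [sphereUniform, ← stdGaussian_map f]
  rw [sphereUniform, Measure.map_map f.continuous.measurable measurable_normalize,
    Measure.map_map measurable_normalize f.continuous.measurable]
  congr 1
  ext x
  simp

lemma ae_norm_eq_one_sphereUniform [Nontrivial E] : ∀ᵐ x ∂(sphereUniform E), ‖x‖ = 1 := by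
  have h0 : ∀ᵐ x ∂(stdGaussian E), x ≠ 0 := by
    let b := stdOrthonormalBasis ℝ E
    have : Nonempty (Fin (Module.finrank ℝ E)) := ⟨⟨0, Module.finrank_pos⟩⟩
    have : NullSingletonClass (gaussianReal 0 1) := nullSingletonClass_gaussianReal one_ne_zero
    rw [stdGaussian_eq_map_pi_orthonormalBasis b, ae_map_iff
      (p := fun x => x ≠ 0) (Measurable.aemeasurable (by fun_prop))
      (measurableSet_singleton 0).compl]
    have hpi : ∀ᵐ x ∂(Measure.pi fun _ : Fin (Module.finrank ℝ E) => gaussianReal 0 1), x ≠ 0 :=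
      Measure.ae_ne _ 0
    filter_upwards [hpi] with x hx h
    refine hx (funext fun i => ?_)
    have := congrArg (fun y => ⟪b i, y⟫) h
    simpa [inner_sum, inner_smul_right, b.inner_eq_ite] using this
  rw [sphereUniform, ae_map_iff measurable_normalize.aemeasurable
    (measurableSet_eq_fun measurable_norm measurable_const)]
  filter_upwards [h0] with x hx
  rw [norm_smul, norm_inv, norm_norm, inv_mul_cancel₀ (norm_ne_zero_iff.mpr hx)]

section Orbit

variable {G : Type*} [Group G] [MeasurableSpace G] {μ : Measure G} [IsProbabilityMeasure μ]
  {ρ : G → E ≃ₗᵢ[ℝ] E}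

/-- The orbit of a unit vector under a random element of a group acting transitively on the
sphere is uniformly distributed. -/
lemma measure_orbit_eq_sphereUniform [Nontrivial E] [MeasurableMul G] [μ.IsMulLeftInvariant]
    (hmeas : Measurable fun p : G × E => ρ p.1 p.2)
    (hmul : ∀ g h x, ρ (g * h) x = ρ h (ρ g x))
    (htrans : ∀ x y : E, ‖x‖ = ‖y‖ → ∃ g, ρ g x = y)
    {B : Set E} (hB : MeasurableSet B) {x : E} (hx : ‖x‖ = 1) :
    μ {g | ρ g x ∈ B} = sphereUniform E B := by
  have hconst : ∀ y : E, ‖y‖ = 1 → μ {g | ρ g y ∈ B} = μ {g | ρ g x ∈ B} := fun y hy => by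
    obtain ⟨g, hg⟩ := htrans x y (hx.trans hy.symm)
    rw [← measure_preimage_mul μ g {h | ρ h x ∈ B}]
    simp only [Set.preimage_ofPred_eq, hmul, hg]
  have hD : MeasurableSet {p : G × E | ρ p.1 p.2 ∈ B} := hmeas hB
  have h1 : (μ.prod (sphereUniform E)) {p : G × E | ρ p.1 p.2 ∈ B} = sphereUniform E B := by
    rw [Measure.prod_apply hD]
    have : ∀ g, sphereUniform E (Prod.mk g ⁻¹' {p : G × E | ρ p.1 p.2 ∈ B}) = sphereUniform E B :=
      fun g => (measurePreserving_sphereUniform (ρ g)).measure_preimage hB.nullMeasurableSet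
    simp_rw [this]
    simp
  rw [← h1, Measure.prod_apply_symm hD]
  have h2 : ∀ᵐ y ∂(sphereUniform E),
      μ ((fun g => (g, y)) ⁻¹' {p : G × E | ρ p.1 p.2 ∈ B}) = μ {g | ρ g x ∈ B} := by
    filter_upwards [ae_norm_eq_one_sphereUniform] with y hy using hconst y hy
  rw [lintegral_congr_ae h2]
  simp

/-- The direction of a linear combination of two independent uniform unit vectors is uniform. -/
lemma prod_sphereUniform_direction_le [Nontrivial E] [MeasurableMul G] [μ.IsMulLeftInvariant]
    (hmeas : Measurable fun p : G × E => ρ p.1 p.2)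
    (hmul : ∀ g h x, ρ (g * h) x = ρ h (ρ g x))
    (htrans : ∀ x y : E, ‖x‖ = ‖y‖ → ∃ g, ρ g x = y)
    {B : Set E} (hB : MeasurableSet B) (r t : ℝ) :
    ((sphereUniform E).prod (sphereUniform E)).real
      {p : E × E | r • p.1 + t • p.2 ≠ 0 ∧
        ‖r • p.1 + t • p.2‖⁻¹ • (r • p.1 + t • p.2) ∈ B} ≤ (sphereUniform E).real B := by
  set D : Set (E × E) := {p : E × E | r • p.1 + t • p.2 ≠ 0 ∧
        ‖r • p.1 + t • p.2‖⁻¹ • (r • p.1 + t • p.2) ∈ B} with hDdef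
  have hw : Measurable fun p : E × E => r • p.1 + t • p.2 := by fun_prop
  have hD : MeasurableSet D :=
    (hw (measurableSet_singleton 0).compl).inter ((measurable_normalize.comp hw) hB)
  set P := (sphereUniform E).prod (sphereUniform E)
  have hF : Measurable fun q : G × (E × E) => (ρ q.1 q.2.1, ρ q.1 q.2.2) :=
    (hmeas.comp (measurable_fst.prodMk measurable_snd.fst)).prodMk
      (hmeas.comp (measurable_fst.prodMk measurable_snd.snd))
  have h1 : (μ.prod P) ((fun q : G × (E × E) => (ρ q.1 q.2.1, ρ q.1 q.2.2)) ⁻¹' D) = P D := by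
    rw [Measure.prod_apply (hF hD)]
    have : ∀ g, P (Prod.mk g ⁻¹' ((fun q : G × (E × E) => (ρ q.1 q.2.1, ρ q.1 q.2.2)) ⁻¹' D))
        = P D := fun g =>
      ((measurePreserving_sphereUniform (ρ g)).prod
        (measurePreserving_sphereUniform (ρ g))).measure_preimage hD.nullMeasurableSet
    simp_rw [this]
    simp
  have h2 : P D ≤ sphereUniform E B := by
    rw [← h1, Measure.prod_apply_symm (hF hD)]
    have : ∀ p : E × E, μ ((fun g => (g, p)) ⁻¹'
        ((fun q : G × (E × E) => (ρ q.1 q.2.1, ρ q.1 q.2.2)) ⁻¹' D)) ≤ sphereUniform E B :=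
        fun p => by
      by_cases hp : r • p.1 + t • p.2 = 0
      · have hempty : (fun g => (g, p)) ⁻¹'
            ((fun q : G × (E × E) => (ρ q.1 q.2.1, ρ q.1 q.2.2)) ⁻¹' D) = ∅ := by
          refine Set.eq_empty_of_forall_notMem fun g hg => hg.1 ?_
          simp only [← map_smul, ← map_add]
          rw [hp, map_zero]
        rw [hempty, measure_empty]
        exact zero_le
      · rw [← measure_orbit_eq_sphereUniform (μ := μ) hmeas hmul htrans hB
          (x := ‖r • p.1 + t • p.2‖⁻¹ • (r • p.1 + t • p.2))
          (by rw [norm_smul, norm_inv, norm_norm, inv_mul_cancel₀ (norm_ne_zero_iff.mpr hp)])]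
        refine measure_mono fun g hg => ?_
        have := hg.2
        simp only [← map_smul, ← map_add, LinearIsometryEquiv.norm_map] at this
        exact this
    refine (lintegral_mono this).trans ?_
    simp
  exact ENNReal.toReal_mono (measure_ne_top _ _) h2

end Orbit

section Forms

variable {ι : Type*} [Fintype ι]

lemma sphereUniform_real_le_abs_diagForm_le (b : OrthonormalBasis ι ℝ E) {c : ι → ℝ} {L s : ℝ}
    (hsum : ∑ i, c i = 0) (hc : ∀ i, |c i| ≤ L) (hs : 0 < s) :
    (sphereUniform E).real {x | s ≤ |diagForm b c x|} ≤
      2 * Real.exp (-(Fintype.card ι * s ^ 2 / (32 * L ^ 2))) := by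
  have hm : ∀ a, MeasurableSet {x : E | s ≤ |diagForm b a x|} := fun a =>
    measurableSet_le measurable_const (continuous_diagForm b a).measurable.abs
  rw [sphereUniform, map_measureReal_apply measurable_normalize (hm c)]
  have hsub : ∀ x : E, s ≤ |diagForm b c (‖x‖⁻¹ • x)| → x ≠ 0 ∧ s * ‖x‖ ^ 2 ≤ |diagForm b c x| :=
    fun x hx => by
      have hx0 : x ≠ 0 := by
        rintro rfl
        rw [diagForm_smul] at hx
        simp at hx
        linarith
      refine ⟨hx0, ?_⟩
      have hn : 0 < ‖x‖ := norm_pos_iff.mpr hx0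
      rw [diagForm_smul, abs_mul, abs_of_nonneg (by positivity), inv_pow, inv_mul_eq_div,
        le_div_iff₀ (by positivity)] at hx
      exact hx
  rcases le_or_gt s L with hsL | hsL
  · have h1 := stdGaussian_real_le_diagForm_le b hsum hc hs hsL
    have h2 := stdGaussian_real_le_diagForm_le b (c := -c) (by simpa using hsum)
      (fun i => by simpa using hc i) hs hsL
    refine (measureReal_mono (s₂ := {x | s * ‖x‖ ^ 2 ≤ diagForm b c x} ∪
      {x | s * ‖x‖ ^ 2 ≤ diagForm b (-c) x}) fun x hx => ?_).trans
      ((measureReal_union_le _ _).trans (by linarith))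
    rcases le_abs.mp (hsub x hx).2 with h | h
    · exact Or.inl h
    · exact Or.inr (by simpa [diagForm_neg] using h)
  · have hempty : (fun x : E => ‖x‖⁻¹ • x) ⁻¹' {x | s ≤ |diagForm b c x|} = ∅ := by
      refine Set.eq_empty_of_forall_notMem fun x hx => ?_
      obtain ⟨hx0, hx1⟩ := hsub x hx
      have := abs_diagForm_le b hc x
      have hn : 0 < ‖x‖ ^ 2 := by positivity
      nlinarith
    rw [hempty, measureReal_empty]
    positivity

lemma le_sphereUniform_real_diagForm_nonneg (b : OrthonormalBasis ι ℝ E) {c : ι → ℝ}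
    (hsum : ∑ i, c i = 0) :
    1 / 2 ^ 17 ≤ (sphereUniform E).real {x | 0 ≤ diagForm b c x} := by
  rw [sphereUniform, map_measureReal_apply measurable_normalize
    (measurableSet_le measurable_const (continuous_diagForm b c).measurable)]
  refine (le_stdGaussian_real_diagForm_nonneg b hsum).trans (measureReal_mono fun x hx => ?_)
  change 0 ≤ diagForm b c (‖x‖⁻¹ • x)
  rw [diagForm_smul]
  exact mul_nonneg (sq_nonneg _) hx

end Forms

end SphereUniform

/-- A sequence of reals with small increments that starts nonnegative and ends nonpositive has a
small term. -/
lemma exists_abs_le_of_sign_change {q : ℕ → ℝ} {N : ℕ} {d : ℝ} (hd : 0 ≤ d)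
    (hstep : ∀ k < N, |q (k + 1) - q k| ≤ d) (h0 : 0 ≤ q 0) (hN : q N ≤ 0) :
    ∃ k ≤ N, |q k| ≤ d := by
  classical
  have hex : ∃ k, q k ≤ 0 := ⟨N, hN⟩
  have hle : Nat.find hex ≤ N := Nat.find_min' hex hN
  have hq := Nat.find_spec hex
  refine ⟨Nat.find hex, hle, ?_⟩
  rcases hk : Nat.find hex with _ | k
  · rw [hk] at hq
    rw [le_antisymm hq h0, abs_zero]
    exact hd
  · have hpos : 0 < q k := not_le.mp (Nat.find_min hex (by omega))
    rw [hk] at hq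
    have := abs_le.mp (hstep k (by omega))
    rw [abs_le]
    constructor <;> linarith

section SmallBall

variable {E ι : Type*} [NormedAddCommGroup E] [InnerProductSpace ℝ E] [Fintype ι]

lemma diagForm_combination (b : OrthonormalBasis ι ℝ E) (c : ι → ℝ) (r t : ℝ) (x y : E) :
    diagForm b c (r • x + t • y) = r ^ 2 * diagForm b c x + t ^ 2 * diagForm b c y +
      r * t * (diagForm b c (x + y) - diagForm b c x - diagForm b c y) := by
  simp only [diagForm, inner_add_right, inner_smul_right, Finset.mul_sum,
    ← Finset.sum_add_distrib, ← Finset.sum_sub_distrib]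
  exact Finset.sum_congr rfl fun i _ => by ring

/-- On a segment between two unit vectors at an acute angle on which a quadratic form changes
sign, some point of a fine subdivision has a small Rayleigh quotient. -/
lemma exists_small_on_acute_segment (b : OrthonormalBasis ι ℝ E) (c : ι → ℝ) {x y : E} {T s : ℝ}
    {N : ℕ} (hN : 0 < N) (hx : ‖x‖ = 1) (hy : ‖y‖ = 1) (hxy : 0 ≤ ⟪x, y⟫)
    (hx0 : 0 ≤ diagForm b c x) (hy0 : diagForm b c y ≤ 0)
    (hxT : |diagForm b c x| ≤ T) (hyT : |diagForm b c y| ≤ T)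
    (hcross : |diagForm b c (x + y) - diagForm b c x - diagForm b c y| ≤ 6 * T)
    (hs : 20 * T ≤ s * N) :
    ∃ k ≤ N, (1 - (k : ℝ) / N) • x + ((k : ℝ) / N) • y ≠ 0 ∧
      |diagForm b c ((1 - (k : ℝ) / N) • x + ((k : ℝ) / N) • y)| ≤
        s * ‖(1 - (k : ℝ) / N) • x + ((k : ℝ) / N) • y‖ ^ 2 := by
  have hN' : (0 : ℝ) < N := by exact_mod_cast hN
  have hT : 0 ≤ T := (abs_nonneg _).trans hxT
  have hd : 10 * T / N ≤ s / 2 := by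
    rw [div_le_iff₀ hN']
    linarith
  obtain ⟨k, hk, hqk⟩ := exists_abs_le_of_sign_change (N := N) (d := 10 * T / N)
    (q := fun k : ℕ => diagForm b c ((1 - (k : ℝ) / N) • x + ((k : ℝ) / N) • y))
    (by positivity) (fun k hk => by
      set t : ℝ := (k : ℝ) / N with ht
      set t' : ℝ := ((k + 1 : ℕ) : ℝ) / N with ht'
      have h0 : 0 ≤ t := by positivity
      have h0' : 0 ≤ t' := by positivity
      have h1 : t ≤ 1 := by
        rw [ht, div_le_one hN']
        exact_mod_cast hk.le
      have h1' : t' ≤ 1 := by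
        rw [ht', div_le_one hN']
        exact_mod_cast hk
      have htt : t' - t = 1 / N := by
        rw [ht, ht']
        push_cast
        ring
      rw [diagForm_combination, diagForm_combination b c (1 - t)]
      set A := diagForm b c x
      set B := diagForm b c y
      set X := diagForm b c (x + y) - A - B
      have hfac : (1 - t') ^ 2 * A + t' ^ 2 * B + (1 - t') * t' * X -
          ((1 - t) ^ 2 * A + t ^ 2 * B + (1 - t) * t * X) =
          (t' - t) * ((t' + t - 2) * A + (t' + t) * B + (1 - t' - t) * X) := by ring
      rw [hfac, htt, abs_mul, abs_of_pos (by positivity), one_div, inv_mul_eq_div]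
      refine div_le_div_of_nonneg_right ?_ hN'.le
      have e1 : |(t' + t - 2) * A| ≤ 2 * T := by
        rw [abs_mul]
        exact mul_le_mul (abs_le.mpr ⟨by linarith, by linarith⟩) hxT (abs_nonneg _) (by norm_num)
      have e2 : |(t' + t) * B| ≤ 2 * T := by
        rw [abs_mul]
        exact mul_le_mul (abs_le.mpr ⟨by linarith, by linarith⟩) hyT (abs_nonneg _) (by norm_num)
      have e3 : |(1 - t' - t) * X| ≤ 1 * (6 * T) := by
        rw [abs_mul]
        exact mul_le_mul (abs_le.mpr ⟨by linarith, by linarith⟩) hcross (abs_nonneg _)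
          (by norm_num)
      have := abs_add_three ((t' + t - 2) * A) ((t' + t) * B) ((1 - t' - t) * X)
      linarith)
    (by simpa using hx0) (by simpa [hN'.ne'] using hy0)
  have hnorm : 1 / 2 ≤ ‖(1 - (k : ℝ) / N) • x + ((k : ℝ) / N) • y‖ ^ 2 := by
    have h0 : 0 ≤ (k : ℝ) / N := by positivity
    have h1 : (k : ℝ) / N ≤ 1 := by
      rw [div_le_one hN']
      exact_mod_cast hk
    rw [norm_add_sq_real, norm_smul, norm_smul, hx, hy, real_inner_smul_left,
      real_inner_smul_right, mul_one, mul_one, Real.norm_eq_abs, Real.norm_eq_abs, sq_abs, sq_abs]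
    have := mul_nonneg (sub_nonneg.mpr h1) (mul_nonneg h0 hxy)
    nlinarith [sq_nonneg (1 - 2 * ((k : ℝ) / N))]
  refine ⟨k, hk, fun h => ?_, ?_⟩
  · rw [h, norm_zero] at hnorm
    norm_num at hnorm
  · have hs0 : 0 ≤ s := by
      by_contra h
      nlinarith [div_nonneg (mul_nonneg (by norm_num : (0 : ℝ) ≤ 10) hT) hN'.le]
    refine hqk.trans (hd.trans ?_)
    nlinarith

/-- A quadratic form that changes sign between two unit vectors `x` and `y` has a small Rayleigh
quotient on a fine subdivision of one of the segments from `x` to `y` and from `x` to `-y`. -/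
lemma exists_small_on_segments (b : OrthonormalBasis ι ℝ E) (c : ι → ℝ) {x y : E} {T s : ℝ}
    {N : ℕ} (hN : 0 < N) (hx : ‖x‖ = 1) (hy : ‖y‖ = 1)
    (hx0 : 0 ≤ diagForm b c x) (hy0 : diagForm b c y ≤ 0)
    (hxT : |diagForm b c x| ≤ T) (hyT : |diagForm b c y| ≤ T)
    (hxyT : |diagForm b c (x + y)| ≤ 4 * T) (hs : 20 * T ≤ s * N) :
    ∃ k ≤ N, ∃ t ∈ ({(k : ℝ) / N, -((k : ℝ) / N)} : Finset ℝ),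
      (1 - (k : ℝ) / N) • x + t • y ≠ 0 ∧
      |diagForm b c ((1 - (k : ℝ) / N) • x + t • y)| ≤
        s * ‖(1 - (k : ℝ) / N) • x + t • y‖ ^ 2 := by
  have hcross : |diagForm b c (x + y) - diagForm b c x - diagForm b c y| ≤ 6 * T := by
    rw [abs_le] at *
    constructor <;> linarith
  rcases le_total 0 ⟪x, y⟫ with h | h
  · obtain ⟨k, hk, hw⟩ := exists_small_on_acute_segment b c hN hx hy h hx0 hy0 hxT hyT hcross hs
    exact ⟨k, hk, _, by simp, hw⟩
  · have hneg : diagForm b c (-y) = diagForm b c y := by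
      simpa using diagForm_smul b c (-1) y
    have hcross' : diagForm b c (x + -y) - diagForm b c x - diagForm b c (-y) =
        -(diagForm b c (x + y) - diagForm b c x - diagForm b c y) := by
      have := diagForm_combination b c 1 (-1) x y
      simp only [one_smul, neg_smul] at this
      rw [this, hneg]
      ring
    obtain ⟨k, hk, hw⟩ := exists_small_on_acute_segment b c (y := -y) hN hx (by simpa using hy)
      (by simpa using h) hx0 (by rwa [hneg]) hxT (by rwa [hneg])
      (by rwa [hcross', abs_neg]) hs
    simp only [smul_neg, ← neg_smul] at hw
    exact ⟨k, hk, _, by simp, hw⟩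

variable [MeasurableSpace E] [BorelSpace E] [FiniteDimensional ℝ E] [Nontrivial E]
  {G : Type*} [Group G] [MeasurableSpace G] [MeasurableMul G] {ρ : G → E ≃ₗᵢ[ℝ] E}

/-- A trace-free quadratic form is close to its mean with probability bounded below in terms of
the width of the window. -/
lemma le_sphereUniform_real_abs_diagForm_le
    (μ : Measure G) [IsProbabilityMeasure μ] [μ.IsMulLeftInvariant]
    (hmeas : Measurable fun p : G × E => ρ p.1 p.2)
    (hmul : ∀ g h x, ρ (g * h) x = ρ h (ρ g x))
    (htrans : ∀ x y : E, ‖x‖ = ‖y‖ → ∃ g, ρ g x = y)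
    (b : OrthonormalBasis ι ℝ E) {c : ι → ℝ} {L s : ℝ} {N : ℕ}
    (hsum : ∑ i, c i = 0) (hc : ∀ i, |c i| ≤ L) (hL : 0 < L) (hN : 0 < N)
    (hs : 640 * L ≤ s * N * √(Fintype.card ι)) :
    1 / 2 ^ 35 ≤ 2 * ((N : ℝ) + 1) * (sphereUniform E).real {x | |diagForm b c x| ≤ s} := by
  set σ := sphereUniform E with hσ
  set P := σ.prod σ with hP
  set p := σ.real {x | |diagForm b c x| ≤ s} with hp
  have hn : 0 < (Fintype.card ι : ℝ) := by
    rw [← Module.finrank_eq_card_basis b.toBasis]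
    exact_mod_cast Module.finrank_pos
  have hsq : √(Fintype.card ι : ℝ) ^ 2 = Fintype.card ι := Real.sq_sqrt hn.le
  have hsqpos : 0 < √(Fintype.card ι : ℝ) := Real.sqrt_pos.mpr hn
  set T : ℝ := 32 * L / √(Fintype.card ι) with hT
  have hTpos : 0 < T := by positivity
  have hsT : 20 * T ≤ s * N := by
    rw [hT, mul_div_assoc', div_le_iff₀ hsqpos]
    linarith
  have htail : σ.real {x | T ≤ |diagForm b c x|} ≤ 1 / 2 ^ 38 := by
    refine (sphereUniform_real_le_abs_diagForm_le b hsum hc hTpos).trans ?_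
    have h32 : (Fintype.card ι : ℝ) * T ^ 2 / (32 * L ^ 2) = (32 : ℕ) * 1 := by
      rw [hT, div_pow, hsq]
      field_simp
      norm_num
    rw [h32, Real.exp_neg, Real.exp_nat_mul]
    have he : (5 / 2 : ℝ) ≤ Real.exp 1 := by linarith [Real.exp_one_gt_d9]
    calc 2 * (Real.exp 1 ^ 32)⁻¹ ≤ 2 * ((5 / 2 : ℝ) ^ 32)⁻¹ := by gcongr
      _ ≤ 1 / 2 ^ 38 := by norm_num
  have hQm := (continuous_diagForm b c).measurable
  have hbig : MeasurableSet {x : E | T ≤ |diagForm b c x|} :=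
    measurableSet_le measurable_const hQm.abs
  have hsmall : MeasurableSet {x : E | |diagForm b c x| ≤ s} :=
    measurableSet_le hQm.abs measurable_const
  have hsign : 1 / 2 ^ 34 ≤ P.real ({x | 0 ≤ diagForm b c x} ×ˢ {x | diagForm b c x ≤ 0}) := by
    rw [hP, measureReal_prod_prod]
    have h1 := le_sphereUniform_real_diagForm_nonneg b hsum
    have h2 := le_sphereUniform_real_diagForm_nonneg b (c := -c) (by simpa using hsum)
    simp only [diagForm_neg, Left.nonneg_neg_iff] at h2
    calc (1 : ℝ) / 2 ^ 34 = 1 / 2 ^ 17 * (1 / 2 ^ 17) := by norm_num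
      _ ≤ _ := mul_le_mul h1 h2 (by positivity) measureReal_nonneg
  let D (B : Set E) (r t : ℝ) : Set (E × E) := {q : E × E | r • q.1 + t • q.2 ≠ 0 ∧
        ‖r • q.1 + t • q.2‖⁻¹ • (r • q.1 + t • q.2) ∈ B}
  have hD : ∀ {B : Set E}, MeasurableSet B → ∀ r t, P.real (D B r t) ≤ σ.real B :=
    fun hB r t => prod_sphereUniform_direction_le (μ := μ) hmeas hmul htrans hB r t
  let S : Set (E × E) := ⋃ k ∈ Finset.range (N + 1),
    ⋃ t ∈ ({(k : ℝ) / N, -((k : ℝ) / N)} : Finset ℝ),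
      D {x | |diagForm b c x| ≤ s} (1 - (k : ℝ) / N) t
  have hS : P.real S ≤ 2 * ((N : ℝ) + 1) * p := by
    have hk : ∀ k : ℕ, P.real (⋃ t ∈ ({(k : ℝ) / N, -((k : ℝ) / N)} : Finset ℝ),
        D {x | |diagForm b c x| ≤ s} (1 - (k : ℝ) / N) t) ≤ 2 * p := fun k => by
      refine (measureReal_biUnion_finset_le _ _).trans ?_
      refine (Finset.sum_le_card_nsmul _ _ p fun t _ => hD hsmall _ t).trans ?_
      rw [nsmul_eq_mul]
      refine mul_le_mul_of_nonneg_right ?_ measureReal_nonneg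
      exact_mod_cast Finset.card_le_two
    refine (measureReal_biUnion_finset_le _ _).trans ?_
    refine (Finset.sum_le_card_nsmul _ _ (2 * p) fun k _ => hk k).trans (le_of_eq ?_)
    rw [Finset.card_range, nsmul_eq_mul]
    push_cast
    ring
  let Z : Set (E × E) := {q | ‖q.1‖ ≠ 1} ∪ {q | ‖q.2‖ ≠ 1}
  have hZ : P.real Z = 0 := by
    have h1 : P {q : E × E | ‖q.1‖ ≠ 1} = 0 :=
      Measure.quasiMeasurePreserving_fst.ae ae_norm_eq_one_sphereUniform
    have h2 : P {q : E × E | ‖q.2‖ ≠ 1} = 0 :=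
      Measure.quasiMeasurePreserving_snd.ae ae_norm_eq_one_sphereUniform
    rw [measureReal_def, measure_union_null h1 h2, ENNReal.toReal_zero]
  have hcover : ({x | 0 ≤ diagForm b c x} ×ˢ {x | diagForm b c x ≤ 0} : Set (E × E)) ⊆
      Z ∪ (D {x | T ≤ |diagForm b c x|} 1 0 ∪ (D {x | T ≤ |diagForm b c x|} 0 1 ∪
        (D {x | T ≤ |diagForm b c x|} 1 1 ∪ S))) := by
    rintro ⟨x, y⟩ ⟨hx0, hy0⟩
    by_contra hnot
    simp only [Set.mem_union, not_or] at hnot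
    obtain ⟨hz, hbx, hby, hbxy, hsm⟩ := hnot
    simp only [Z, Set.mem_union, Set.mem_ofPred_eq, not_or, not_not] at hz
    obtain ⟨hx, hy⟩ := hz
    have hxne : x ≠ 0 := norm_ne_zero_iff.mp (by rw [hx]; exact one_ne_zero)
    have hyne : y ≠ 0 := norm_ne_zero_iff.mp (by rw [hy]; exact one_ne_zero)
    have hxT : |diagForm b c x| < T := by
      simpa [D, hx, hxne] using hbx
    have hyT : |diagForm b c y| < T := by
      simpa [D, hy, hyne] using hby
    have hxyT : |diagForm b c (x + y)| ≤ 4 * T := by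
      rcases eq_or_ne (x + y) 0 with h | h
      · rw [h]
        simp [diagForm, hTpos.le]
      · have hlt : |diagForm b c (‖x + y‖⁻¹ • (x + y))| < T := by
          simpa [D, h] using hbxy
        have hpos : 0 < ‖x + y‖ ^ 2 := by positivity
        rw [diagForm_smul, abs_mul, inv_pow, abs_of_pos (inv_pos.mpr hpos), inv_mul_eq_div,
          div_lt_iff₀ hpos] at hlt
        have htri : ‖x + y‖ ≤ 2 := (norm_add_le x y).trans (by rw [hx, hy]; norm_num)
        have h4 : ‖x + y‖ ^ 2 ≤ 4 := by nlinarith [norm_nonneg (x + y)]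
        nlinarith
    obtain ⟨k, hk, t, ht, hne, hle⟩ :=
      exists_small_on_segments b c hN hx hy hx0 hy0 hxT.le hyT.le hxyT hsT
    refine hsm ?_
    simp only [S, Set.mem_iUnion]
    refine ⟨k, Finset.mem_range.mpr (by omega), t, ht, hne, ?_⟩
    have hpos : 0 < ‖(1 - (k : ℝ) / N) • x + t • y‖ ^ 2 := by positivity
    change |diagForm b c _| ≤ s
    rw [diagForm_smul, abs_mul, inv_pow, abs_of_pos (inv_pos.mpr hpos), inv_mul_eq_div,
      div_le_iff₀ hpos]
    exact hle
  have hub : P.real ({x | 0 ≤ diagForm b c x} ×ˢ {x | diagForm b c x ≤ 0}) ≤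
      1 / 2 ^ 38 + (1 / 2 ^ 38 + (1 / 2 ^ 38 + 2 * ((N : ℝ) + 1) * p)) := by
    refine (measureReal_mono hcover).trans ((measureReal_union_le _ _).trans ?_)
    rw [hZ, zero_add]
    refine (measureReal_union_le _ _).trans (add_le_add ((hD hbig _ _).trans htail) ?_)
    refine (measureReal_union_le _ _).trans (add_le_add ((hD hbig _ _).trans htail) ?_)
    exact (measureReal_union_le _ _).trans (add_le_add ((hD hbig _ _).trans htail) hS)
  norm_num at *
  linarith

end SmallBall

section Toeplitz

lemma integral_cos_two_pi_int_mul (n : ℤ) :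
    ∫ ν in (-(1 : ℝ) / 2)..(1 / 2), Real.cos (2 * Real.pi * n * ν) = if n = 0 then 1 else 0 := by
  split_ifs with h
  · subst h
    norm_num
  · have hn : 2 * Real.pi * (n : ℝ) ≠ 0 := by
      have : (n : ℝ) ≠ 0 := by exact_mod_cast h
      have := Real.pi_ne_zero
      positivity
    rw [intervalIntegral.integral_comp_mul_left (fun x => Real.cos x) hn, integral_cos]
    rw [show 2 * Real.pi * (n : ℝ) * (1 / 2) = n * Real.pi by ring,
      show 2 * Real.pi * (n : ℝ) * (-1 / 2) = -(n * Real.pi) by ring, Real.sin_neg,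
      Real.sin_int_mul_pi]
    simp

variable {C : ℤ → ℝ}

lemma abs_mul_cos_le (a θ : ℝ) : ‖a * Real.cos θ‖ ≤ |a| := by
  rw [Real.norm_eq_abs, abs_mul]
  exact mul_le_of_le_one_right (abs_nonneg _) (Real.abs_cos_le_one _)

lemma summable_mul_cos (hC : Summable fun k => |C k|) (ν : ℝ) :
    Summable fun k : ℤ => C k * Real.cos (2 * Real.pi * k * ν) :=
  Summable.of_norm_bounded hC fun _ => abs_mul_cos_le _ _

lemma continuous_tsum_mul_cos (hC : Summable fun k => |C k|) :
    Continuous fun ν : ℝ => ∑' k : ℤ, C k * Real.cos (2 * Real.pi * k * ν) :=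
  continuous_tsum (fun _ => by fun_prop) hC fun _ _ => abs_mul_cos_le _ _

/-- Recovering an autocovariance from its spectral density. -/
lemma integral_tsum_mul_cos_mul_cos (hsymm : ∀ k, C (-k) = C k) (hC : Summable fun k => |C k|)
    (n : ℤ) :
    ∫ ν in (-(1 : ℝ) / 2)..(1 / 2), (∑' k : ℤ, C k * Real.cos (2 * Real.pi * k * ν)) *
      Real.cos (2 * Real.pi * n * ν) = C n := by
  have h := intervalIntegral.hasSum_integral_of_dominated_convergence
    (μ := volume) (a := -(1 : ℝ) / 2) (b := 1 / 2)
    (F := fun (k : ℤ) ν => C k * Real.cos (2 * Real.pi * k * ν) * Real.cos (2 * Real.pi * n * ν))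
    (f := fun ν => (∑' k : ℤ, C k * Real.cos (2 * Real.pi * k * ν)) *
      Real.cos (2 * Real.pi * n * ν)) (fun k _ => |C k|)
    (fun k => (by fun_prop : Continuous _).aestronglyMeasurable)
    (fun k => ae_of_all _ fun ν _ => by
      rw [norm_mul]
      exact (mul_le_of_le_one_right (norm_nonneg _) (Real.abs_cos_le_one _)).trans
        (abs_mul_cos_le _ _))
    (ae_of_all _ fun _ _ => hC) (by simp)
    (ae_of_all _ fun ν _ => (summable_mul_cos hC ν).hasSum.mul_right _)
  have hk : ∀ k : ℤ, ∫ ν in (-(1 : ℝ) / 2)..(1 / 2),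
      C k * Real.cos (2 * Real.pi * k * ν) * Real.cos (2 * Real.pi * n * ν) =
      (if k = n then C n / 2 else 0) + (if k = -n then C n / 2 else 0) := fun k => by
    have hcos : ∀ ν : ℝ, C k * Real.cos (2 * Real.pi * k * ν) * Real.cos (2 * Real.pi * n * ν) =
        C k / 2 * (Real.cos (2 * Real.pi * (k - n : ℤ) * ν) +
          Real.cos (2 * Real.pi * (k + n : ℤ) * ν)) := fun ν => by
      push_cast
      rw [show 2 * Real.pi * ((k : ℝ) - n) * ν =
          2 * Real.pi * k * ν - 2 * Real.pi * n * ν by ring,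
        show 2 * Real.pi * ((k : ℝ) + n) * ν =
          2 * Real.pi * k * ν + 2 * Real.pi * n * ν by ring, Real.cos_sub, Real.cos_add]
      ring
    simp_rw [hcos]
    rw [intervalIntegral.integral_const_mul, intervalIntegral.integral_add
      (Continuous.intervalIntegrable (by fun_prop) _ _)
      (Continuous.intervalIntegrable (by fun_prop) _ _),
      integral_cos_two_pi_int_mul, integral_cos_two_pi_int_mul, mul_add, mul_ite, mul_ite]
    simp only [sub_eq_zero, add_eq_zero_iff_eq_neg, mul_one, mul_zero]
    congr 1
    · exact if_ctx_congr Iff.rfl (fun h => by rw [h]) fun _ => rfl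
    · exact if_ctx_congr Iff.rfl (fun h => by rw [h, hsymm]) fun _ => rfl
  simp_rw [hk] at h
  have h' := (hasSum_ite_eq n (C n / 2)).add (hasSum_ite_eq (-n) (C n / 2))
  rw [h.unique h']
  ring

/-- A Toeplitz form with nonnegative spectral density is nonnegative. -/
lemma toeplitz_form_nonneg (hsymm : ∀ k, C (-k) = C k) (hC : Summable fun k => |C k|)
    (hS : ∀ ν ∈ Set.Icc (-(1 : ℝ) / 2) (1 / 2),
      0 ≤ ∑' k : ℤ, C k * Real.cos (2 * Real.pi * (k : ℝ) * ν))
    {m : ℕ} (x : Fin m → ℝ) :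
    0 ≤ ∑ j : Fin m, ∑ k : Fin m, x j * x k * C ((j : ℤ) - (k : ℤ)) := by
  have hcont := continuous_tsum_mul_cos hC
  set S : ℝ → ℝ := fun ν => ∑' k : ℤ, C k * Real.cos (2 * Real.pi * k * ν) with hSdef
  have hterm : ∀ j k : Fin m, x j * x k * C ((j : ℤ) - (k : ℤ)) =
      ∫ ν in (-(1 : ℝ) / 2)..(1 / 2), x j * x k *
        (S ν * Real.cos (2 * Real.pi * ((j : ℤ) - (k : ℤ) : ℤ) * ν)) := fun j k => by
    rw [intervalIntegral.integral_const_mul, integral_tsum_mul_cos_mul_cos hsymm hC]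
  simp_rw [hterm]
  have hcomm : ∑ j : Fin m, ∑ k : Fin m, ∫ ν in (-(1 : ℝ) / 2)..(1 / 2), x j * x k *
        (S ν * Real.cos (2 * Real.pi * ((j : ℤ) - (k : ℤ) : ℤ) * ν)) =
      ∫ ν in (-(1 : ℝ) / 2)..(1 / 2), ∑ j : Fin m, ∑ k : Fin m, x j * x k *
        (S ν * Real.cos (2 * Real.pi * ((j : ℤ) - (k : ℤ) : ℤ) * ν)) := by
    rw [intervalIntegral.integral_finsetSum fun j _ =>
      Continuous.intervalIntegrable (by fun_prop) _ _]
    refine Finset.sum_congr rfl fun j _ => ?_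
    rw [intervalIntegral.integral_finsetSum fun k _ =>
      Continuous.intervalIntegrable (by fun_prop) _ _]
  rw [hcomm]
  refine intervalIntegral.integral_nonneg (by norm_num) fun ν hν => ?_
  have hsq : ∑ j : Fin m, ∑ k : Fin m, x j * x k *
        (S ν * Real.cos (2 * Real.pi * ((j : ℤ) - (k : ℤ) : ℤ) * ν)) =
      S ν * ((∑ j : Fin m, x j * Real.cos (2 * Real.pi * (j : ℕ) * ν)) ^ 2 +
        (∑ j : Fin m, x j * Real.sin (2 * Real.pi * (j : ℕ) * ν)) ^ 2) := by
    rw [sq, sq, Finset.sum_mul_sum, Finset.sum_mul_sum, ← Finset.sum_add_distrib, Finset.mul_sum]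
    refine Finset.sum_congr rfl fun j _ => ?_
    rw [← Finset.sum_add_distrib, Finset.mul_sum]
    refine Finset.sum_congr rfl fun k _ => ?_
    push_cast
    rw [show 2 * Real.pi * (((j : ℕ) : ℝ) - ((k : ℕ) : ℝ)) * ν =
      2 * Real.pi * (j : ℕ) * ν - 2 * Real.pi * (k : ℕ) * ν by ring, Real.cos_sub]
    ring
  rw [hsq]
  exact mul_nonneg (hS ν hν) (by positivity)

/-- A Toeplitz form is bounded by the supremum of its spectral density. -/
lemma toeplitz_form_le (hsymm : ∀ k, C (-k) = C k) (hC : Summable fun k => |C k|)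
    {m : ℕ} (x : Fin m → ℝ) :
    ∑ j : Fin m, ∑ k : Fin m, x j * x k * C ((j : ℤ) - (k : ℤ)) ≤
      (⨆ ν : Set.Icc (-(1 : ℝ) / 2) (1 / 2),
        ∑' k : ℤ, C k * Real.cos (2 * Real.pi * (k : ℝ) * (ν : ℝ))) * ∑ i, x i ^ 2 := by
  set L := ⨆ ν : Set.Icc (-(1 : ℝ) / 2) (1 / 2),
        ∑' k : ℤ, C k * Real.cos (2 * Real.pi * (k : ℝ) * (ν : ℝ)) with hL
  have hbdd : BddAbove (Set.range fun ν : Set.Icc (-(1 : ℝ) / 2) (1 / 2) =>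
      ∑' k : ℤ, C k * Real.cos (2 * Real.pi * (k : ℝ) * (ν : ℝ))) := by
    refine ⟨∑' k, |C k|, ?_⟩
    rintro _ ⟨ν, rfl⟩
    exact (summable_mul_cos hC ν).tsum_le_tsum
      (fun k => (le_abs_self _).trans (abs_mul_cos_le _ _)) hC
  have hsingle : Summable fun k : ℤ => |(Pi.single 0 L : ℤ → ℝ) k| :=
    summable_of_ne_finset_zero (s := {0}) fun k hk => by
      rw [Pi.single_eq_of_ne (by simpa using hk), abs_zero]
  have h := toeplitz_form_nonneg (C := Pi.single 0 L - C) (m := m)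
    (fun k => by
      rcases eq_or_ne k 0 with rfl | hk
      · simp
      · simp [hk, hsymm])
    (Summable.of_nonneg_of_le (fun _ => abs_nonneg _) (fun k => abs_sub _ _) (hsingle.add hC))
    (fun ν hν => by
      simp only [Pi.sub_apply, sub_mul]
      rw [(summable_mul_cos hsingle ν).tsum_sub (summable_mul_cos hC ν),
        tsum_eq_single 0 fun k hk => by rw [Pi.single_eq_of_ne hk, zero_mul]]
      simp only [Pi.single_eq_same, Int.cast_zero, mul_zero, zero_mul, Real.cos_zero, mul_one,
        sub_nonneg]
      exact le_ciSup hbdd ⟨ν, hν⟩) x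
  have hdiag : ∀ j k : Fin m, x j * x k * (Pi.single 0 L - C : ℤ → ℝ) ((j : ℤ) - (k : ℤ)) =
      (if k = j then L * x j ^ 2 else 0) - x j * x k * C ((j : ℤ) - (k : ℤ)) := fun j k => by
    rw [Pi.sub_apply, mul_sub]
    congr 1
    split_ifs with hjk
    · subst hjk
      rw [sub_self, Pi.single_eq_same]
      ring
    · rw [Pi.single_eq_of_ne (by omega), mul_zero]
  simp only [hdiag, Finset.sum_sub_distrib, Finset.sum_ite_eq', Finset.mem_univ, if_true,
    ← Finset.mul_sum] at h
  linarith

end Toeplitz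

section OrthogonalAction

variable {m : ℕ}

lemma orthogonalGroup_coe_mul_transpose (U : orthogonalGroup (Fin m) ℝ) :
    (U : Matrix (Fin m) (Fin m) ℝ) * (U : Matrix (Fin m) (Fin m) ℝ)ᵀ = 1 :=
  (mem_orthogonalGroup_iff (Fin m) ℝ).mp U.2

lemma norm_sq_eq_dotProduct (x : EuclideanSpace ℝ (Fin m)) : ‖x‖ ^ 2 = x.ofLp ⬝ᵥ x.ofLp := by
  rw [EuclideanSpace.real_norm_sq_eq, dotProduct]
  exact Finset.sum_congr rfl fun i _ => sq _

/-- The action `x ↦ Uᵀ x` of an orthogonal matrix on Euclidean space. -/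
noncomputable def transposeAction (U : orthogonalGroup (Fin m) ℝ) :
    EuclideanSpace ℝ (Fin m) ≃ₗᵢ[ℝ] EuclideanSpace ℝ (Fin m) :=
  LinearIsometry.toLinearIsometryEquiv
    { toLinearMap := toLpLin 2 2 (U : Matrix (Fin m) (Fin m) ℝ)ᵀ
      norm_map' := fun x => by
        rw [← sq_eq_sq₀ (norm_nonneg _) (norm_nonneg _), norm_sq_eq_dotProduct,
          norm_sq_eq_dotProduct, ofLp_toLpLin, toLin'_apply, dotProduct_mulVec,
          ← mulVec_transpose, transpose_transpose, mulVec_mulVec,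
          orthogonalGroup_coe_mul_transpose, one_mulVec] } rfl

lemma ofLp_transposeAction (U : orthogonalGroup (Fin m) ℝ) (x : EuclideanSpace ℝ (Fin m)) :
    (transposeAction U x).ofLp = (U : Matrix (Fin m) (Fin m) ℝ)ᵀ *ᵥ x.ofLp := rfl

lemma transposeAction_mul (U V : orthogonalGroup (Fin m) ℝ) (x : EuclideanSpace ℝ (Fin m)) :
    transposeAction (U * V) x = transposeAction V (transposeAction U x) := by
  apply WithLp.ofLp_injective 2
  rw [ofLp_transposeAction, ofLp_transposeAction, ofLp_transposeAction, mulVec_mulVec,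
    ← transpose_mul]
  rfl

lemma exists_transposeAction_eq {x y : EuclideanSpace ℝ (Fin m)} (h : ‖x‖ = ‖y‖) :
    ∃ U : orthogonalGroup (Fin m) ℝ, transposeAction U x = y := by
  set r := Submodule.reflection (ℝ ∙ (x - y))ᗮ with hr
  set M : Matrix (Fin m) (Fin m) ℝ := (toLpLin 2 2).symm r.toLinearEquiv.toLinearMap with hM
  have hMr : ∀ z, toLpLin 2 2 M z = r z := fun z => by
    rw [hM, LinearEquiv.apply_symm_apply]
    rfl
  have hMM : Mᵀ * M = 1 := by
    ext i j
    have hcol : ∀ k, (r (EuclideanSpace.single k (1 : ℝ))).ofLp = fun l => M l k := fun k => by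
      rw [← hMr, ofLp_toLpLin, toLin'_apply]
      ext l
      simp
    have hinner := r.inner_map_map (EuclideanSpace.single i (1 : ℝ)) (EuclideanSpace.single j 1)
    rw [EuclideanSpace.inner_eq_star_dotProduct, hcol, hcol] at hinner
    rw [mul_apply', one_apply]
    calc (fun l => M l i) ⬝ᵥ (fun l => M l j)
        = (fun l => M l j) ⬝ᵥ star fun l => M l i := dotProduct_comm _ _
      _ = if i = j then 1 else 0 := by
          rw [hinner, EuclideanSpace.inner_single_left]
          simp
  refine ⟨⟨Mᵀ, (mem_orthogonalGroup_iff (Fin m) ℝ).mpr ?_⟩, ?_⟩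
  · change Mᵀ * Mᵀᵀ = 1
    rw [transpose_transpose, hMM]
  · rw [← Submodule.reflection_sub h, ← hr, ← hMr]
    rfl

lemma measurable_transposeAction [MeasurableSpace (orthogonalGroup (Fin m) ℝ)]
    [BorelSpace (orthogonalGroup (Fin m) ℝ)] :
    Measurable fun p : orthogonalGroup (Fin m) ℝ × EuclideanSpace ℝ (Fin m) =>
      transposeAction p.1 p.2 := by
  have hentry : ∀ i j, Measurable fun U : orthogonalGroup (Fin m) ℝ =>
      (U : Matrix (Fin m) (Fin m) ℝ) i j := fun i j =>
    (continuous_subtype_val.matrix_elem i j).measurable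
  have hcoord : ∀ j, Measurable fun x : EuclideanSpace ℝ (Fin m) => x.ofLp j := fun j => by
    fun_prop
  refine (WithLp.measurable_toLp 2 (Fin m → ℝ)).comp (measurable_pi_lambda _ fun i => ?_)
  change Measurable fun p : orthogonalGroup (Fin m) ℝ × EuclideanSpace ℝ (Fin m) =>
    ∑ j, (p.1 : Matrix (Fin m) (Fin m) ℝ) j i * p.2.ofLp j
  exact Finset.measurable_sum _ fun j _ =>
    ((hentry j i).comp measurable_fst).mul ((hcoord j).comp measurable_snd)

end OrthogonalAction

lemma dotProduct_mulVec_eq_diagForm {m : ℕ} {A : Matrix (Fin m) (Fin m) ℝ} (hA : A.IsHermitian)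
    (x : EuclideanSpace ℝ (Fin m)) :
    x.ofLp ⬝ᵥ A *ᵥ x.ofLp = diagForm hA.eigenvectorBasis hA.eigenvalues x := by
  have hinner : ∀ u v : EuclideanSpace ℝ (Fin m), ⟪u, v⟫ = u.ofLp ⬝ᵥ v.ofLp := fun u v => by
    rw [EuclideanSpace.inner_eq_star_dotProduct, dotProduct_comm]
    rfl
  have hAt : Aᵀ = A := hA
  have h := hA.eigenvectorBasis.sum_inner_mul_inner x (WithLp.toLp 2 (A *ᵥ x.ofLp))
  rw [hinner x] at h
  rw [← h, diagForm]
  refine Finset.sum_congr rfl fun i _ => ?_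
  rw [hinner _ (WithLp.toLp 2 (A *ᵥ x.ofLp)), dotProduct_mulVec, ← mulVec_transpose, hAt,
    hA.mulVec_eigenvectorBasis, smul_dotProduct, ← hinner, real_inner_comm, smul_eq_mul]
  ring

/-- Combining a subgaussian tail bound with a small ball estimate removes the constant in front of
the exponential. -/
lemma one_sub_exp_le_of_tail_of_small_ball {n ε p : ℝ} (hn : 0 < n) (hε : 0 < ε)
    (htail : 1 - p ≤ 2 * Real.exp (-(n * ε ^ 2 / 8)))
    (hsmall : ∀ N : ℕ, 0 < N → 320 ≤ ε * N * √n → 1 / 2 ^ 35 ≤ 2 * ((N : ℝ) + 1) * p) :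
    1 - Real.exp (-(1 / 2 ^ 48) * (n - 1) * ε ^ 2) ≤ p := by
  set t : ℝ := ε * √n with ht
  have ht0 : 0 < t := by positivity
  have ht2 : n * ε ^ 2 = t ^ 2 := by
    rw [ht, mul_pow, Real.sq_sqrt hn.le]
    ring
  have hmono : Real.exp (-(1 / 2 ^ 48 * t ^ 2)) ≤
      Real.exp (-(1 / 2 ^ 48) * (n - 1) * ε ^ 2) := by
    refine Real.exp_le_exp.mpr ?_
    rw [← ht2]
    nlinarith [sq_nonneg ε]
  refine (sub_le_sub_left hmono 1).trans ?_
  rcases le_or_gt 4 t with h4 | h4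
  · rw [ht2] at htail
    have h2 : 2 ≤ Real.exp (t ^ 2 / 16) := by
      have := Real.add_one_le_exp (t ^ 2 / 16)
      nlinarith
    have h3 : 2 * Real.exp (-(t ^ 2 / 8)) ≤ Real.exp (-(t ^ 2 / 16)) := by
      calc 2 * Real.exp (-(t ^ 2 / 8)) ≤ Real.exp (t ^ 2 / 16) * Real.exp (-(t ^ 2 / 8)) := by
            gcongr
        _ = Real.exp (-(t ^ 2 / 16)) := by
            rw [← Real.exp_add]
            ring_nf
    have h5 : Real.exp (-(t ^ 2 / 16)) ≤ Real.exp (-(1 / 2 ^ 48 * t ^ 2)) := by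
      refine Real.exp_le_exp.mpr ?_
      nlinarith [sq_nonneg t]
    linarith
  · have hdiv : 0 < 320 / t := by positivity
    have hceil := Nat.le_ceil (320 / t)
    have hceil' := (Nat.ceil_lt_add_one hdiv.le).le
    have hN := hsmall ⌈320 / t⌉₊ (Nat.ceil_pos.mpr hdiv) (by
      rw [div_le_iff₀ ht0] at hceil
      rw [ht] at hceil ⊢
      linarith)
    have hp0 : 0 ≤ p := by
      by_contra hneg
      push Not at hneg
      have : (0 : ℝ) < 1 / 2 ^ 35 := by positivity
      nlinarith [Nat.cast_nonneg (α := ℝ) ⌈320 / t⌉₊]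
    have hupper : ((⌈320 / t⌉₊ : ℝ) + 1) * t ≤ 328 := by
      have hmul : 320 / t * t = 320 := div_mul_cancel₀ _ ht0.ne'
      nlinarith
    have hlin : 1 / 2 ^ 35 * t ≤ 656 * p := by
      calc 1 / 2 ^ 35 * t ≤ 2 * ((⌈320 / t⌉₊ : ℝ) + 1) * p * t := by gcongr
        _ = 2 * (((⌈320 / t⌉₊ : ℝ) + 1) * t) * p := by ring
        _ ≤ 2 * 328 * p := by gcongr
        _ = 656 * p := by ring
    have hexp := Real.add_one_le_exp (-(1 / 2 ^ 48 * t ^ 2))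
    have hsq : t ^ 2 ≤ 4 * t := by nlinarith
    norm_num at *
    linarith

/-- Theorem 1 of the paper (concentration of measure for FIR filters): there is a
universal constant `κ > 0` such that for every `m ≥ 2`, every summable symmetric
autocovariance `C` with `C(0) > 0` and nonnegative spectral density
`S(ν) = ∑_k C(k) cos(2πkν)`, every nonzero coefficient vector `b ∈ ℝ^m` and every
`ε > 0`, a Haar-distributed orthogonal `U` satisfies
`|bᵀ U Σ Uᵀ b / (C(0) ‖b‖²) - 1| ≤ (2ε / C(0)) · sup_ν S(ν)`
with probability at least `1 - exp(-κ (m-1) ε²)`, where `Σ` is the Toeplitz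
matrix with entries `Σ_{jk} = C(j-k)`. -/
theorem sic_concentration_fir :
    ∃ κ : ℝ, 0 < κ ∧
      ∀ m : ℕ, 2 ≤ m →
      ∀ C : ℤ → ℝ, (∀ k : ℤ, C (-k) = C k) → (Summable fun k : ℤ => |C k|) →
        0 < C 0 →
        (∀ ν ∈ Set.Icc (-(1 : ℝ) / 2) (1 / 2),
          0 ≤ ∑' k : ℤ, C k * Real.cos (2 * Real.pi * (k : ℝ) * ν)) →
      ∀ b : Fin m → ℝ, b ≠ 0 →
      ∀ ε : ℝ, 0 < ε →
      let _i : MeasurableSpace (Matrix.orthogonalGroup (Fin m) ℝ) := borel _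
      ∀ μ : Measure (Matrix.orthogonalGroup (Fin m) ℝ),
        μ.IsHaarMeasure → IsProbabilityMeasure μ →
        ENNReal.ofReal (1 - Real.exp (-κ * ((m : ℝ) - 1) * ε ^ 2)) ≤
          μ {U : Matrix.orthogonalGroup (Fin m) ℝ |
              abs (b ⬝ᵥ
                    (((U : Matrix (Fin m) (Fin m) ℝ) *
                        (Matrix.of fun j k : Fin m => C ((j : ℤ) - (k : ℤ))) *
                        (U : Matrix (Fin m) (Fin m) ℝ)ᵀ).mulVec b) /
                    (C 0 * ∑ i, b i ^ 2) - 1) ≤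
                (2 * ε / C 0) *
                  ⨆ ν : Set.Icc (-(1 : ℝ) / 2) (1 / 2),
                    ∑' k : ℤ, C k * Real.cos (2 * Real.pi * (k : ℝ) * (ν : ℝ))} := by
  refine ⟨1 / 2 ^ 48, by positivity, ?_⟩
  intro m hm C hsymm hC hC0 hS b hb ε hε _i μ hμ hμp
  have : BorelSpace (orthogonalGroup (Fin m) ℝ) := ⟨rfl⟩
  have : Nonempty (Fin m) := ⟨⟨0, by omega⟩⟩
  have hmpos : (0 : ℝ) < m := by exact_mod_cast (by omega : 0 < m)
  set A : Matrix (Fin m) (Fin m) ℝ := Matrix.of fun j k : Fin m => C ((j : ℤ) - (k : ℤ)) with hA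
  set L := ⨆ ν : Set.Icc (-(1 : ℝ) / 2) (1 / 2),
    ∑' k : ℤ, C k * Real.cos (2 * Real.pi * (k : ℝ) * (ν : ℝ)) with hLdef
  have hAh : A.IsHermitian := by
    ext j k
    simp only [hA, conjTranspose_apply, of_apply, star_trivial]
    rw [← hsymm, neg_sub]
  have hform : ∀ x : Fin m → ℝ, x ⬝ᵥ A *ᵥ x =
      ∑ j : Fin m, ∑ k : Fin m, x j * x k * C ((j : ℤ) - (k : ℤ)) := fun x => by
    simp only [dotProduct, mulVec, hA, of_apply, Finset.mul_sum]
    exact Finset.sum_congr rfl fun j _ => Finset.sum_congr rfl fun k _ => by ring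
  have heig : ∀ i, 0 ≤ hAh.eigenvalues i ∧ hAh.eigenvalues i ≤ L := fun i => by
    have hself : hAh.eigenvalues i = (hAh.eigenvectorBasis i).ofLp ⬝ᵥ
        A *ᵥ (hAh.eigenvectorBasis i).ofLp := by
      rw [dotProduct_mulVec_eq_diagForm hAh]
      simp [diagForm, OrthonormalBasis.inner_eq_ite]
    rw [hself, hform]
    refine ⟨toeplitz_form_nonneg hsymm hC hS _, (toeplitz_form_le hsymm hC _).trans_eq ?_⟩
    rw [← EuclideanSpace.real_norm_sq_eq, OrthonormalBasis.norm_eq_one, one_pow, mul_one]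
  have htrace : ∑ i, hAh.eigenvalues i = m * C 0 := by
    have := hAh.trace_eq_sum_eigenvalues
    simp only [trace, diag_apply, hA, of_apply, sub_self, Finset.sum_const, Finset.card_univ,
      Fintype.card_fin, nsmul_eq_mul] at this
    simpa using this.symm
  have hCL : C 0 ≤ L := by
    have := Finset.sum_le_card_nsmul Finset.univ _ L fun i _ => (heig i).2
    rw [htrace, Finset.card_univ, Fintype.card_fin, nsmul_eq_mul] at this
    exact le_of_mul_le_mul_left this hmpos
  have hL : 0 < L := hC0.trans_le hCL
  set c : Fin m → ℝ := fun i => hAh.eigenvalues i - C 0 with hc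
  have hcsum : ∑ i, c i = 0 := by
    simp [hc, htrace]
  have hcL : ∀ i, |c i| ≤ L := fun i => by
    obtain ⟨h1, h2⟩ := heig i
    rw [abs_le]
    constructor <;> simp only [hc] <;> linarith
  set B : Set (EuclideanSpace ℝ (Fin m)) :=
    {x | |diagForm hAh.eigenvectorBasis c x| ≤ 2 * ε * L} with hB
  have hBmeas : MeasurableSet B :=
    measurableSet_le (continuous_diagForm _ _).measurable.abs measurable_const
  set β : EuclideanSpace ℝ (Fin m) := WithLp.toLp 2 b with hβ
  have hβ0 : ‖β‖ ≠ 0 := by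
    rw [norm_ne_zero_iff]
    intro h
    exact hb (congrArg WithLp.ofLp h)
  have hβsq : ∑ i, b i ^ 2 = ‖β‖ ^ 2 := (EuclideanSpace.real_norm_sq_eq β).symm
  have hset : {U : orthogonalGroup (Fin m) ℝ | abs (b ⬝ᵥ
      (((U : Matrix (Fin m) (Fin m) ℝ) * A * (U : Matrix (Fin m) (Fin m) ℝ)ᵀ).mulVec b) /
        (C 0 * ∑ i, b i ^ 2) - 1) ≤ (2 * ε / C 0) * L} =
      {U | transposeAction U (‖β‖⁻¹ • β) ∈ B} := by
    ext U
    have hquad : b ⬝ᵥ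
        (((U : Matrix (Fin m) (Fin m) ℝ) * A * (U : Matrix (Fin m) (Fin m) ℝ)ᵀ).mulVec b) =
        diagForm hAh.eigenvectorBasis hAh.eigenvalues (transposeAction U β) := by
      rw [← dotProduct_mulVec_eq_diagForm hAh, ofLp_transposeAction, ← mulVec_mulVec,
        ← mulVec_mulVec, dotProduct_mulVec, ← mulVec_transpose]
    have hval : b ⬝ᵥ
        (((U : Matrix (Fin m) (Fin m) ℝ) * A * (U : Matrix (Fin m) (Fin m) ℝ)ᵀ).mulVec b) /
          (C 0 * ∑ i, b i ^ 2) - 1 =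
        diagForm hAh.eigenvectorBasis c (transposeAction U (‖β‖⁻¹ • β)) / C 0 := by
      rw [hquad, hβsq, map_smul, diagForm_smul, hc, diagForm_sub_const,
        LinearIsometryEquiv.norm_map]
      field_simp
    simp only [Set.mem_ofPred_eq, hB]
    rw [hval, abs_div, abs_of_pos hC0, div_mul_eq_mul_div, div_le_div_iff_of_pos_right hC0]
  rw [hset, measure_orbit_eq_sphereUniform (μ := μ) measurable_transposeAction transposeAction_mul
    (fun _ _ => exists_transposeAction_eq) hBmeas
    (by rw [norm_smul, norm_inv, norm_norm, inv_mul_cancel₀ hβ0])]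
  rw [← ofReal_measureReal]
  refine ENNReal.ofReal_le_ofReal (one_sub_exp_le_of_tail_of_small_ball hmpos hε ?_ ?_)
  · have htail := sphereUniform_real_le_abs_diagForm_le hAh.eigenvectorBasis hcsum hcL
      (s := 2 * ε * L) (by positivity)
    rw [Fintype.card_fin, show (m : ℝ) * (2 * ε * L) ^ 2 / (32 * L ^ 2) = m * ε ^ 2 / 8 by
      field_simp; norm_num] at htail
    rw [← probReal_compl_eq_one_sub hBmeas]
    refine (measureReal_mono fun x hx => ?_).trans htail
    simp only [hB, Set.mem_compl_iff, Set.mem_ofPred_eq, not_le] at hx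
    exact hx.le
  · intro N hN hNε
    refine le_sphereUniform_real_abs_diagForm_le μ measurable_transposeAction transposeAction_mul
      (fun _ _ => exists_transposeAction_eq) hAh.eigenvectorBasis hcsum hcL hL hN ?_
    rw [Fintype.card_fin]
    nlinarith
end
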